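/- arXiv:2512.17285 — 3 statements merged into one kernel-verified Lean document; each statement's English description precedes it below -/
import Mathlib

section
/- (Marchwicki–Nowakowski–Prus-Wiśniowski) Let d : ℕ → ℝ be a sequence of positive terms with ∑ₙ d(n) < ∞ whose achievement set D := E(d) is a Cantorval. Then there exist sequences c, c' : ℕ → ℝ of positive terms with ∑ₙ c(n) < ∞ and ∑ₙ c'(n) < ∞ such that E(c) and E(c') are Cantor sets, D + E(c) is a Cantorval, and D + E(c') is a nondegenerate compact interval. -/
/-!
Write `D` for the set of subsums of `x`, where `x n = d (n + 1)`, and `low x t` for the sum of the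
terms of `x` strictly smaller than `t`. The sum of two achievement sets is the achievement set of
the two sequences taken together, so both claims concern subsums of a family over `ℕ ⊕ ℕ`. Both
auxiliary sequences have the form `c n = r n - r (n + 1)` with `r (n + 1) < r n / 2`; then `r n` is
the tail sum of `c`, each term exceeds the sum of the later ones, and the subsums are an injective
continuous image of `ℕ → Bool`, hence a Cantor set (`isCantorSet_subsums_diffs`).

*Interval* (`exists_interval_sum`). By Kakeya's criterion (`kakeya`) it suffices that each term of
the joint family is at most the sum of the strictly smaller ones. This holds as soon as `r 0`
exceeds all terms of `x` and `r n - 2 * r (n + 1) ≤ low x (r (n + 1))`, which can be arranged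
recursively because `low x` is positive and monotone on the positive reals.

*Cantorval* (`exists_cantorval_sum`). If Kakeya's condition held for all small terms of `x`, then
`D` would be a finite union of translates of an interval and not a Cantorval; so there are
arbitrarily small terms `t` with `low x t < t` (`exists_small_kakeya_gap`). The tails `r n` are
chosen so small that infinitely many of the gaps `(low x t, t)` survive in the joint family, whose
subsums therefore have gaps arbitrarily near `0`; they also contain the intervals of `D`. Such a set
is a Cantorval (`isCantorval_subsums`): to the right of the right endpoint `q` of a gap it is
locally the translate by `q` of its part near `0`, the set being symmetric the same holds mirrored
at left endpoints, and near `0` there are intervals by Baire's theorem (`exists_Icc_subset_tail`).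
-/

open Set Filter Topology MeasureTheory
open scoped Pointwise

/-- The achievement set (set of subsums) of the series `∑_{n ≥ 1} x n`
(sequences are indexed by `n ≥ 1`; the value `x 0` is irrelevant). -/
def achievementSet (x : ℕ → ℝ) : Set ℝ :=
  {y : ℝ | ∃ A : Set ℕ, A ⊆ {n | 1 ≤ n} ∧ HasSum (fun n : A => x (n : ℕ)) y}

/-- The `n`-th remainder `r n = ∑_{i > n} x i` of a series. -/
noncomputable def remainder (x : ℕ → ℝ) (n : ℕ) : ℝ :=
  ∑' i : {i : ℕ // n < i}, x (i : ℕ)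

/-- The set of Kakeya conditions `K(x) = {n ≥ 1 : x n > r n}`. -/
def kakeyaSet (x : ℕ → ℝ) : Set ℕ :=
  {n : ℕ | 1 ≤ n ∧ remainder x n < x n}

/-- A Cantor set: a set homeomorphic to the Cantor ternary set. -/
def IsCantorSet (A : Set ℝ) : Prop :=
  Nonempty (A ≃ₜ cantorSet)

/-- A multi-interval set: the union of finitely many (at least one)
nondegenerate compact intervals. -/
def IsMultiInterval (A : Set ℝ) : Prop :=
  ∃ S : Finset (ℝ × ℝ), S.Nonempty ∧ (∀ p ∈ S, p.1 < p.2) ∧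
    A = ⋃ p ∈ S, Set.Icc p.1 p.2

/-- The gaps of a set `A ⊆ ℝ`: the bounded connected components of its complement. -/
def gaps (A : Set ℝ) : Set (Set ℝ) :=
  {G | (∃ x ∉ A, G = connectedComponentIn Aᶜ x) ∧ Bornology.IsBounded G}

/-- The nondegenerate connected components of a set `A ⊆ ℝ`. -/
def intervalComponents (A : Set ℝ) : Set (Set ℝ) :=
  {I | (∃ x ∈ A, I = connectedComponentIn A x) ∧ ¬ I.Subsingleton}

/-- A Cantorval: a nonempty compact subset of `ℝ` possessing at least one gap and at
least one nondegenerate component, such that both endpoints of every gap are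
accumulation points both of other gaps and of nondegenerate components. -/
def IsCantorval (A : Set ℝ) : Prop :=
  A.Nonempty ∧ IsCompact A ∧ (gaps A).Nonempty ∧ (intervalComponents A).Nonempty ∧
    ∀ G ∈ gaps A, ∀ p ∈ ({sInf G, sSup G} : Set ℝ),
      (∀ ε > (0 : ℝ), ∃ G' ∈ gaps A, G' ≠ G ∧ (G' ∩ Metric.ball p ε).Nonempty) ∧
      (∀ ε > (0 : ℝ), ∃ I ∈ intervalComponents A, (I ∩ (Metric.ball p ε \ {p})).Nonempty)


/-! ### Subsums over an arbitrary index type -/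

section Subsums

variable {ι κ : Type*}

/-- The set of subsums `∑_{i ∈ A} x i`, `A ⊆ ι`, of a family indexed by an arbitrary type. A
subfamily indexed by `T : Set ι` is represented by `T.indicator x`, since zero terms do not
change the set of subsums. -/
def subsums (x : ι → ℝ) : Set ℝ :=
  {y | ∃ A : Set ι, y = ∑' i, A.indicator x i}

/-- The sum of all terms of the family that are strictly smaller than the threshold `t`. -/
noncomputable def low (x : ι → ℝ) (t : ℝ) : ℝ :=
  ∑' i, {j | x j < t}.indicator x i

theorem tsum_indicator_le_of_subset {x : ι → ℝ} (hx : ∀ i, 0 ≤ x i) (hs : Summable x)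
    {A B : Set ι} (h : ∀ i ∈ A, x i ≠ 0 → i ∈ B) :
    ∑' i, A.indicator x i ≤ ∑' i, B.indicator x i := by
  refine (hs.indicator A).tsum_le_tsum (fun i => ?_) (hs.indicator B)
  by_cases hi : i ∈ A
  · by_cases h0 : x i = 0
    · simp [Set.indicator, h0]
    · simp [hi, h i hi h0]
  · simpa [hi] using Set.indicator_nonneg (fun i _ => hx i) i

theorem tsum_indicator_nonneg {x : ι → ℝ} (hx : ∀ i, 0 ≤ x i) (A : Set ι) :
    0 ≤ ∑' i, A.indicator x i :=
  tsum_nonneg fun i => Set.indicator_nonneg (fun i _ => hx i) i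

theorem tsum_indicator_le_tsum {x : ι → ℝ} (hx : ∀ i, 0 ≤ x i) (hs : Summable x) (A : Set ι) :
    ∑' i, A.indicator x i ≤ ∑' i, x i := by
  have := tsum_indicator_le_of_subset hx hs (A := A) (B := Set.univ) (fun _ _ _ => Set.mem_univ _)
  simpa using this

theorem subsums_nonneg {x : ι → ℝ} (hx : ∀ i, 0 ≤ x i) {y : ℝ} (hy : y ∈ subsums x) : 0 ≤ y := by
  obtain ⟨A, rfl⟩ := hy
  exact tsum_indicator_nonneg hx A

theorem subsums_le {x : ι → ℝ} (hx : ∀ i, 0 ≤ x i) (hs : Summable x) {y : ℝ}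
    (hy : y ∈ subsums x) : y ≤ ∑' i, x i := by
  obtain ⟨A, rfl⟩ := hy
  exact tsum_indicator_le_tsum hx hs A

theorem zero_mem_subsums (x : ι → ℝ) : (0 : ℝ) ∈ subsums x := ⟨∅, by simp⟩

theorem tsum_indicator_add_compl {x : ι → ℝ} (hs : Summable x) (A : Set ι) :
    ∑' i, A.indicator x i + ∑' i, Aᶜ.indicator x i = ∑' i, x i := by
  rw [← (hs.indicator A).tsum_add (hs.indicator Aᶜ)]
  simp only [Set.indicator_self_add_compl_apply]

theorem subsums_reflect {x : ι → ℝ} (hs : Summable x) {y : ℝ} (hy : y ∈ subsums x) :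
    ∑' i, x i - y ∈ subsums x := by
  obtain ⟨A, rfl⟩ := hy
  exact ⟨Aᶜ, by rw [← tsum_indicator_add_compl hs A]; ring⟩

theorem subsums_indicator_subset (x : ι → ℝ) (T : Set ι) :
    subsums (T.indicator x) ⊆ subsums x := by
  rintro _ ⟨A, rfl⟩
  exact ⟨A ∩ T, by simp only [Set.indicator_indicator]⟩

theorem subsums_split {x : ι → ℝ} (hs : Summable x) (T : Set ι) {y : ℝ} (hy : y ∈ subsums x) :
    ∃ u ∈ subsums (T.indicator x), ∃ v ∈ subsums (Tᶜ.indicator x), y = u + v := by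
  obtain ⟨A, rfl⟩ := hy
  refine ⟨_, ⟨A, rfl⟩, _, ⟨A, rfl⟩, ?_⟩
  rw [← ((hs.indicator T).indicator A).tsum_add ((hs.indicator Tᶜ).indicator A)]
  congr 1; ext i
  by_cases h : i ∈ A <;> by_cases h' : i ∈ T <;> simp [h, h']

theorem subsums_join {x : ι → ℝ} (hs : Summable x) (T : Set ι) {u v : ℝ}
    (hu : u ∈ subsums (T.indicator x)) (hv : v ∈ subsums (Tᶜ.indicator x)) :
    u + v ∈ subsums x := by
  obtain ⟨A, rfl⟩ := hu
  obtain ⟨B, rfl⟩ := hv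
  refine ⟨A ∩ T ∪ B ∩ Tᶜ, ?_⟩
  rw [← ((hs.indicator T).indicator A).tsum_add ((hs.indicator Tᶜ).indicator B)]
  congr 1; ext i
  by_cases h : i ∈ A <;> by_cases h'' : i ∈ B <;> by_cases h' : i ∈ T <;> simp [h, h', h'']

theorem continuous_boolSum {x : ι → ℝ} (hx : ∀ i, 0 ≤ x i) (hs : Summable x) :
    Continuous fun b : ι → Bool => ∑' i, {j | b j = true}.indicator x i := by
  refine continuous_tsum (fun i => ?_) hs (fun i b => ?_)
  · have : (fun b : ι → Bool => {j | b j = true}.indicator x i) =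
        (fun c : Bool => if c then x i else 0) ∘ fun b : ι → Bool => b i := by
      ext b; simp [Set.indicator]
    rw [this]
    exact continuous_of_discreteTopology.comp (continuous_apply i)
  · by_cases h : b i = true
    · simp [h, abs_of_nonneg (hx i)]
    · simp [h, hx i]

theorem subsums_eq_range (x : ι → ℝ) :
    subsums x = Set.range fun b : ι → Bool => ∑' i, {j | b j = true}.indicator x i := by
  classical
  ext y
  constructor
  · rintro ⟨A, rfl⟩
    exact ⟨fun i => decide (i ∈ A), by simp⟩
  · rintro ⟨b, rfl⟩
    exact ⟨_, rfl⟩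

theorem isCompact_subsums {x : ι → ℝ} (hx : ∀ i, 0 ≤ x i) (hs : Summable x) :
    IsCompact (subsums x) := by
  rw [subsums_eq_range]
  exact isCompact_range (continuous_boolSum hx hs)

theorem summable_sumElim {x : ι → ℝ} {z : κ → ℝ} (hx : Summable x) (hz : Summable z) :
    Summable (Sum.elim x z) :=
  Summable.sum _ (by simpa using hx) (by simpa using hz)

theorem tsum_indicator_sumElim {x : ι → ℝ} {z : κ → ℝ} (hx : Summable x) (hz : Summable z)
    (A : Set (ι ⊕ κ)) :
    ∑' i, A.indicator (Sum.elim x z) i =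
      ∑' i, (Sum.inl ⁻¹' A).indicator x i + ∑' i, (Sum.inr ⁻¹' A).indicator z i := by
  have h1 : (A.indicator (Sum.elim x z)) ∘ Sum.inl = (Sum.inl ⁻¹' A).indicator x := by
    ext i; simp [Set.indicator]; rfl
  have h2 : (A.indicator (Sum.elim x z)) ∘ Sum.inr = (Sum.inr ⁻¹' A).indicator z := by
    ext i; simp [Set.indicator]; rfl
  rw [Summable.tsum_sum (by rw [h1]; exact hx.indicator _) (by rw [h2]; exact hz.indicator _)]
  rw [← h1, ← h2]; rfl

theorem subsums_sumElim {x : ι → ℝ} {z : κ → ℝ} (hx : Summable x) (hz : Summable z) :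
    subsums (Sum.elim x z) = subsums x + subsums z := by
  ext y
  rw [Set.mem_add]
  constructor
  · rintro ⟨A, rfl⟩
    exact ⟨_, ⟨_, rfl⟩, _, ⟨_, rfl⟩, (tsum_indicator_sumElim hx hz A).symm⟩
  · rintro ⟨_, ⟨A, rfl⟩, _, ⟨B, rfl⟩, rfl⟩
    refine ⟨Sum.inl '' A ∪ Sum.inr '' B, ?_⟩
    rw [tsum_indicator_sumElim hx hz]
    simp only [Set.preimage_union, Set.preimage_image_eq _ Sum.inl_injective,
      Set.preimage_image_eq _ Sum.inr_injective, Set.preimage_inl_image_inr,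
      Set.preimage_inr_image_inl, Set.union_empty, Set.empty_union]

theorem low_sumElim {x : ι → ℝ} {z : κ → ℝ} (hx : Summable x) (hz : Summable z) (t : ℝ) :
    low (Sum.elim x z) t = low x t + low z t := by
  rw [low, tsum_indicator_sumElim hx hz]; rfl

theorem low_nonneg {x : ι → ℝ} (hx : ∀ i, 0 ≤ x i) (t : ℝ) : 0 ≤ low x t :=
  tsum_indicator_nonneg hx _

theorem low_mono {x : ι → ℝ} (hx : ∀ i, 0 ≤ x i) (hs : Summable x) : Monotone (low x) :=
  fun _ _ h => tsum_indicator_le_of_subset hx hs fun _ hi _ => lt_of_lt_of_le hi h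

/-- A subsum below `t` uses no term `≥ t`, so it is at most `low x t`; hence the points strictly
between `low x t` and `t` are not subsums. -/
theorem not_mem_subsums {x : ι → ℝ} (hx : ∀ i, 0 ≤ x i) (hs : Summable x) {t y : ℝ}
    (h1 : low x t < y) (h2 : y < t) : y ∉ subsums x := by
  rintro ⟨A, rfl⟩
  refine absurd h1 (not_lt.2 (tsum_indicator_le_of_subset hx hs fun i hi _ => ?_))
  refine lt_of_le_of_lt ?_ h2
  have := (hs.indicator A).le_tsum i (fun j _ => Set.indicator_nonneg (fun i _ => hx i) j)
  simpa [hi] using this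

theorem exists_finset_tail_lt (x : ι → ℝ) {ε : ℝ} (hε : 0 < ε) :
    ∃ F : Finset ι, ∑' i, ((F : Set ι)ᶜ).indicator x i < ε := by
  have h := ((tendsto_order.1 (tendsto_tsum_compl_atTop_zero x)).2 ε hε).exists
  obtain ⟨F, hF⟩ := h
  refine ⟨F, ?_⟩
  rw [← tsum_subtype]
  exact hF

theorem tsum_indicator_eq_finset {x : ι → ℝ} (hs : Summable x) (F : Finset ι) (A : Set ι)
    [DecidablePred (· ∈ A)] :
    ∑' i, A.indicator x i =
      ∑ i ∈ F.filter (· ∈ A), x i + ∑' i, A.indicator (((F : Set ι)ᶜ).indicator x) i := by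
  rw [← tsum_indicator_add_compl (hs.indicator A) (F : Set ι), ← Finset.sum_indicator_eq_sum_filter]
  congr 1
  · rw [tsum_eq_sum (s := F) (fun i hi => by simp [hi])]
    refine Finset.sum_congr rfl fun i hi => ?_
    simp [hi, Set.indicator]
  · congr 1; ext i
    by_cases h : i ∈ A <;> by_cases h' : i ∈ F <;> simp [h, h']

theorem finite_subsums_finset (x : ι → ℝ) (F : Finset ι) :
    (subsums ((F : Set ι).indicator x)).Finite := by
  classical
  refine (F.powerset.image fun B => ∑ i ∈ B, x i).finite_toSet.subset ?_
  rintro _ ⟨A, rfl⟩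
  simp only [Finset.coe_image, Set.mem_image, Finset.mem_coe, Finset.mem_powerset]
  refine ⟨F.filter (· ∈ A), Finset.filter_subset _ _, ?_⟩
  rw [tsum_eq_sum (s := F) (fun i hi => by simp [Set.indicator, hi]),
    ← Finset.sum_indicator_eq_sum_filter]
  refine Finset.sum_congr rfl fun i hi => ?_
  simp [hi, Set.indicator]

end Subsums

theorem achievementSet_eq_subsums {x : ℕ → ℝ} (hs : Summable x) :
    achievementSet x = subsums fun n => x (n + 1) := by
  have key : ∀ A : Set ℕ, A ⊆ {n | 1 ≤ n} →
      ∑' n, A.indicator x n = ∑' n, ((· + 1) ⁻¹' A).indicator (fun n => x (n + 1)) n := by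
    intro A hA
    have h0 : (0 : ℕ) ∉ A := fun h => by simpa using hA h
    rw [(hs.indicator A).tsum_eq_zero_add]
    simp [h0, Set.indicator]; rfl
  ext y
  constructor
  · rintro ⟨A, hA, h⟩
    refine ⟨(· + 1) ⁻¹' A, ?_⟩
    rw [← key A hA]
    exact ((hasSum_subtype_iff_indicator (f := x)).1 h).tsum_eq.symm
  · rintro ⟨B, rfl⟩
    have hA : (· + 1) '' B ⊆ {n : ℕ | 1 ≤ n} := by rintro _ ⟨n, _, rfl⟩; simp
    refine ⟨(· + 1) '' B, hA, (hasSum_subtype_iff_indicator (f := x)).2 ?_⟩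
    have := (hs.indicator ((· + 1) '' B)).hasSum
    rw [key _ hA, Set.preimage_image_eq _ (add_left_injective 1)] at this
    exact this

/-! ### Kakeya's criterion -/

section Kakeya

variable {ι : Type*}

/-- The finite core of Kakeya's criterion: up to an error `δ`, the subsums of `H` fill
`[0, δ + ∑ H]` as soon as no term exceeds `δ` plus the sum of the smaller ones. The terms are added
in increasing order; a new term `a` with `x a ≤ δ + ∑ s` shifts the range already covered. -/
theorem finset_kakeya {x : ι → ℝ} {δ : ℝ} (H : Finset ι) (hx : ∀ i, 0 ≤ x i)
    (hH : ∀ i ∈ H, x i ≤ δ + ∑ j ∈ H.filter (fun j => x j < x i), x j) (y : ℝ) (hy : 0 ≤ y)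
    (hy' : y ≤ δ + ∑ i ∈ H, x i) :
    ∃ B ⊆ H, ∑ i ∈ B, x i ≤ y ∧ y ≤ ∑ i ∈ B, x i + δ := by
  classical
  induction H using Finset.induction_on_max_value x generalizing y with
  | empty => exact ⟨∅, by simp, by simpa using hy, by simpa using hy'⟩
  | insert a s ha hmax ih =>
    have hs : ∀ i ∈ s, x i ≤ δ + ∑ j ∈ s.filter (fun j => x j < x i), x j := by
      intro i hi
      have := hH i (Finset.mem_insert_of_mem hi)
      rwa [Finset.filter_insert, if_neg (not_lt.2 (hmax i hi))] at this
    have hxa : x a ≤ δ + ∑ i ∈ s, x i := by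
      have := hH a (Finset.mem_insert_self _ _)
      rw [Finset.filter_insert, if_neg (lt_irrefl _)] at this
      have h2 := Finset.sum_le_sum_of_subset_of_nonneg
        (Finset.filter_subset (fun j => x j < x a) s) (fun i _ _ => hx i)
      linarith
    by_cases hc : y ≤ δ + ∑ i ∈ s, x i
    · obtain ⟨B, hB, h⟩ := ih hs y hy hc
      exact ⟨B, hB.trans (Finset.subset_insert _ _), h⟩
    · rw [Finset.sum_insert ha] at hy'
      obtain ⟨B, hB, h1, h2⟩ := ih hs (y - x a) (by linarith) (by linarith)
      refine ⟨insert a B, Finset.insert_subset_insert _ hB, ?_⟩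
      rw [Finset.sum_insert (fun h => ha (hB h))]
      constructor <;> linarith

theorem low_le_finset {x : ι → ℝ} (hx : ∀ i, 0 ≤ x i) (hs : Summable x) (F : Finset ι) (t : ℝ) :
    low x t ≤ ∑' i, ((F : Set ι)ᶜ).indicator x i + ∑ i ∈ F.filter (fun j => x j < t), x i := by
  classical
  rw [low, tsum_indicator_eq_finset hs F, add_comm]
  have hnn : ∀ i, 0 ≤ ((F : Set ι)ᶜ).indicator x i := Set.indicator_nonneg (fun i _ => hx i)
  have := tsum_indicator_le_tsum hnn (hs.indicator _) {j | x j < t}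
  simpa using this

/-- Kakeya's criterion below a threshold `ε`: if every term smaller than `ε` is at most the sum of
the terms strictly smaller than it, the terms below `ε` have all of `[0, low x ε]` as subsums. -/
theorem kakeya_low {x : ι → ℝ} (hx : ∀ i, 0 ≤ x i) (hs : Summable x) {ε : ℝ}
    (h : ∀ i, x i < ε → x i ≤ low x (x i)) :
    Set.Icc 0 (low x ε) ⊆ subsums ({j | x j < ε}.indicator x) := by
  classical
  intro y ⟨hy0, hy1⟩
  have hnn : ∀ i, 0 ≤ {j | x j < ε}.indicator x i := Set.indicator_nonneg (fun i _ => hx i)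
  have hcl := (isCompact_subsums hnn (hs.indicator _)).isClosed
  rw [← hcl.closure_eq, Metric.mem_closure_iff]
  intro η hη
  obtain ⟨F, hF⟩ := exists_finset_tail_lt x hη
  set δ := ∑' i, ((F : Set ι)ᶜ).indicator x i with hδ
  obtain ⟨B, hB, h1, h2⟩ := finset_kakeya (F.filter (fun j => x j < ε)) hx (by
    intro i hi
    rw [Finset.mem_filter] at hi
    refine (h i hi.2).trans ((low_le_finset hx hs F _).trans_eq ?_)
    congr 2
    ext j
    simp only [Finset.mem_filter]
    constructor
    · rintro ⟨h3, h4⟩; exact ⟨⟨h3, h4.trans hi.2⟩, h4⟩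
    · rintro ⟨⟨h3, _⟩, h4⟩; exact ⟨h3, h4⟩) y hy0 (hy1.trans (low_le_finset hx hs F _))
  refine ⟨∑ i ∈ B, x i, ⟨B, ?_⟩, ?_⟩
  · rw [tsum_eq_sum (s := B) (fun i hi => by simp [hi])]
    refine Finset.sum_congr rfl fun i hi => ?_
    have := (Finset.mem_filter.1 (hB hi)).2
    simp [hi, this]
  · rw [Real.dist_eq, abs_of_nonneg (by linarith)]
    linarith

theorem kakeya {x : ι → ℝ} (hx : ∀ i, 0 ≤ x i) (hs : Summable x)
    (h : ∀ i, x i ≤ low x (x i)) : subsums x = Set.Icc 0 (∑' i, x i) := by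
  refine Set.Subset.antisymm (fun y hy => ⟨subsums_nonneg hx hy, subsums_le hx hs hy⟩) ?_
  -- a threshold exceeding every term
  have hlt : ∀ i, x i < ∑' i, x i + 1 := fun i => by
    have := hs.le_tsum i (fun j _ => hx j)
    linarith
  have huniv : {j | x j < ∑' i, x i + 1} = Set.univ := by
    ext j; simp only [Set.mem_ofPred_eq, Set.mem_univ, iff_true]; exact hlt j
  have := kakeya_low hx hs (ε := ∑' i, x i + 1) (fun i _ => h i)
  rwa [low, huniv, Set.indicator_univ] at this

end Kakeya

/-! ### Gaps and Cantorvals -/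

theorem gap_structure {A : Set ℝ} (hA : IsClosed A) {G : Set ℝ} (hG : G ∈ gaps A) :
    sInf G < sSup G ∧ sInf G ∈ A ∧ sSup G ∈ A ∧ G = Set.Ioo (sInf G) (sSup G) := by
  obtain ⟨⟨x, hx, hGx⟩, hb⟩ := hG
  have hopen : IsOpen G := hGx ▸ hA.isOpen_compl.connectedComponentIn
  have hpre : IsPreconnected G := hGx ▸ isPreconnected_connectedComponentIn
  have hxG : x ∈ G := hGx ▸ mem_connectedComponentIn hx
  have hne : G.Nonempty := ⟨x, hxG⟩
  have hba := hb.bddAbove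
  have hbb := hb.bddBelow
  have hsub : Set.Ioo (sInf G) (sSup G) ⊆ G :=
    IsConnected.Ioo_csInf_csSup_subset ⟨hne, hpre⟩ hbb hba
  -- a boundary point outside `A` would belong to the open component `G`
  have hbd : ∀ p, p ∈ closure G → p ∉ G → p ∈ A := by
    intro p hp hpG
    by_contra hpA
    have ho : IsOpen (connectedComponentIn Aᶜ p) := hA.isOpen_compl.connectedComponentIn
    obtain ⟨z, hz1, hz2⟩ := mem_closure_iff.1 hp _ ho (mem_connectedComponentIn hpA)
    rw [hGx] at hz2
    have e1 := connectedComponentIn_eq hz1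
    have e2 := connectedComponentIn_eq hz2
    apply hpG
    rw [hGx, e2, ← e1]
    exact mem_connectedComponentIn hpA
  have hinf : sInf G ∉ G := by
    intro h
    obtain ⟨l, hl, hlG⟩ := (mem_nhdsLE_iff_exists_Ioc_subset).1
      (mem_nhdsWithin_of_mem_nhds (hopen.mem_nhds h))
    have : (l + sInf G) / 2 ∈ G := hlG ⟨by simp at hl; linarith, by simp at hl; linarith⟩
    have := csInf_le hbb this
    simp at hl; linarith
  have hsup : sSup G ∉ G := by
    intro h
    obtain ⟨l, hl, hlG⟩ := (mem_nhdsGE_iff_exists_Ico_subset).1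
      (mem_nhdsWithin_of_mem_nhds (hopen.mem_nhds h))
    have : (l + sSup G) / 2 ∈ G := hlG ⟨by simp at hl; linarith, by simp at hl; linarith⟩
    have := le_csSup hba this
    simp at hl; linarith
  have hG' : G = Set.Ioo (sInf G) (sSup G) := by
    refine Set.Subset.antisymm (fun z hz => ⟨?_, ?_⟩) hsub
    · exact lt_of_le_of_ne (csInf_le hbb hz) (fun h => hinf (h ▸ hz))
    · exact lt_of_le_of_ne (le_csSup hba hz) (fun h => hsup (h ▸ hz))
  have hxx := hG' ▸ hxG
  exact ⟨hxx.1.trans hxx.2, hbd _ (csInf_mem_closure hne hbb) hinf,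
    hbd _ (csSup_mem_closure hne hba) hsup, hG'⟩

theorem component_mem_gaps {A : Set ℝ} {u v y : ℝ} (hu : u ∈ A) (hv : v ∈ A) (hy : y ∉ A)
    (huy : u < y) (hyv : y < v) : connectedComponentIn Aᶜ y ∈ gaps A := by
  refine ⟨⟨y, hy, rfl⟩, (Metric.isBounded_Icc u v).subset fun z hz => ?_⟩
  have hoc := (isPreconnected_connectedComponentIn (x := y) (F := Aᶜ)).ordConnected
  have hyy : y ∈ connectedComponentIn Aᶜ y := mem_connectedComponentIn hy
  refine ⟨?_, ?_⟩ <;> by_contra! hc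
  · exact connectedComponentIn_subset _ _ (hoc.out hz hyy ⟨hc.le, huy.le⟩) hu
  · exact connectedComponentIn_subset _ _ (hoc.out hyy hz ⟨hyv.le, hc.le⟩) hv

theorem component_mem_intervalComponents {A : Set ℝ} {a b : ℝ} (hab : a < b)
    (h : Set.Icc a b ⊆ A) :
    connectedComponentIn A a ∈ intervalComponents A ∧ Set.Icc a b ⊆ connectedComponentIn A a := by
  have hsub : Set.Icc a b ⊆ connectedComponentIn A a :=
    isPreconnected_Icc.subset_connectedComponentIn ⟨le_rfl, hab.le⟩ h
  refine ⟨⟨⟨a, h ⟨le_rfl, hab.le⟩, rfl⟩, fun hs => ?_⟩, hsub⟩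
  exact hab.ne (hs (hsub ⟨le_rfl, hab.le⟩) (hsub ⟨hab.le, le_rfl⟩))

/-- A sufficient condition for being a Cantorval in terms of points and intervals instead of
connected components: on the outer side of each endpoint of every gap `(p, q)` there are,
arbitrarily close, points of the complement and nondegenerate intervals contained in `A`. -/
theorem isCantorval_of_local {A : Set ℝ} (hc : IsCompact A)
    (h0 : ∃ u ∈ A, ∃ v ∈ A, ∃ y ∉ A, u < y ∧ y < v)
    (h1 : ∃ a b, a < b ∧ Set.Icc a b ⊆ A)
    (hr : ∀ p ∈ A, ∀ q ∈ A, p < q → Disjoint (Set.Ioo p q) A → ∀ ε > 0,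
      (∃ y ∉ A, q < y ∧ y < q + ε) ∧ ∃ a b, a < b ∧ q < a ∧ b < q + ε ∧ Set.Icc a b ⊆ A)
    (hl : ∀ p ∈ A, ∀ q ∈ A, p < q → Disjoint (Set.Ioo p q) A → ∀ ε > 0,
      (∃ y ∉ A, p - ε < y ∧ y < p) ∧ ∃ a b, a < b ∧ p - ε < a ∧ b < p ∧ Set.Icc a b ⊆ A) :
    IsCantorval A := by
  obtain ⟨u, hu, v, hv, y, hy, huy, hyv⟩ := h0
  obtain ⟨a, b, hab, hI⟩ := h1
  refine ⟨⟨u, hu⟩, hc, ⟨_, component_mem_gaps hu hv hy huy hyv⟩,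
    ⟨_, (component_mem_intervalComponents hab hI).1⟩, ?_⟩
  intro G hG
  obtain ⟨hpq, hp, hq, hGe⟩ := gap_structure hc.isClosed hG
  have hdis : Disjoint (Set.Ioo (sInf G) (sSup G)) A := by
    rw [Set.disjoint_left, ← hGe]
    obtain ⟨⟨x, _, hGx⟩, _⟩ := hG
    intro z hz
    rw [hGx] at hz
    exact connectedComponentIn_subset _ _ hz
  set p := sInf G
  set q := sSup G
  rintro e (rfl | rfl)
  · refine ⟨fun ε hε => ?_, fun ε hε => ?_⟩
    · obtain ⟨_, a, b, hab, ha, hb, hI⟩ := hl p hp q hq hpq hdis ε hε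
      obtain ⟨⟨y, hy, hy1, hy2⟩, _⟩ := hl p hp q hq hpq hdis (p - b) (by linarith)
      have hyy : y ∈ connectedComponentIn Aᶜ y := mem_connectedComponentIn hy
      refine ⟨_, component_mem_gaps (hI ⟨hab.le, le_rfl⟩) hp hy (by linarith) hy2, ?_, y, hyy, ?_⟩
      · intro he
        rw [he, hGe] at hyy
        linarith [hyy.1]
      · rw [Metric.mem_ball, Real.dist_eq, abs_lt]; constructor <;> linarith
    · obtain ⟨_, a, b, hab, ha, hb, hI⟩ := hl p hp q hq hpq hdis ε hε
      obtain ⟨h1, h2⟩ := component_mem_intervalComponents hab hI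
      refine ⟨_, h1, a, h2 ⟨le_rfl, hab.le⟩, ?_, ?_⟩
      · rw [Metric.mem_ball, Real.dist_eq, abs_lt]; constructor <;> linarith
      · exact fun h => by rw [Set.mem_singleton_iff] at h; linarith
  · refine ⟨fun ε hε => ?_, fun ε hε => ?_⟩
    · obtain ⟨_, a, b, hab, ha, hb, hI⟩ := hr p hp q hq hpq hdis ε hε
      obtain ⟨⟨y, hy, hy1, hy2⟩, _⟩ := hr p hp q hq hpq hdis (a - q) (by linarith)
      have hyy : y ∈ connectedComponentIn Aᶜ y := mem_connectedComponentIn hy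
      refine ⟨_, component_mem_gaps hq (hI ⟨le_rfl, hab.le⟩) hy hy1 (by linarith), ?_, y, hyy, ?_⟩
      · intro he
        rw [he, hGe] at hyy
        linarith [hyy.2]
      · rw [Metric.mem_ball, Real.dist_eq, abs_lt]; constructor <;> linarith
    · obtain ⟨_, a, b, hab, ha, hb, hI⟩ := hr p hp q hq hpq hdis ε hε
      obtain ⟨h1, h2⟩ := component_mem_intervalComponents hab hI
      refine ⟨_, h1, a, h2 ⟨le_rfl, hab.le⟩, ?_, ?_⟩
      · rw [Metric.mem_ball, Real.dist_eq, abs_lt]; constructor <;> linarith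
      · exact fun h => by rw [Set.mem_singleton_iff] at h; linarith

/-- An interval component of `A` contains a nondegenerate compact interval. -/
theorem exists_Icc_subset_of_isCantorval {A : Set ℝ} (hA : IsCantorval A) :
    ∃ a b, a < b ∧ Set.Icc a b ⊆ A := by
  obtain ⟨-, -, -, ⟨I, ⟨x, hx, rfl⟩, hI⟩, -⟩ := hA
  rw [Set.not_subsingleton_iff] at hI
  obtain ⟨a, ha, b, hb, hab⟩ := hI.exists_lt
  exact ⟨a, b, hab, (isPreconnected_connectedComponentIn.Icc_subset ha hb).trans
    (connectedComponentIn_subset _ _)⟩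

/-! ### The local structure of a set of subsums at the endpoints of its gaps -/

section Local

variable {ι : Type*}

/-- If the subsums contain an interval, so do the subsums avoiding a given finite set of indices:
the former set is a finite union of translates of the latter, which is closed. -/
theorem exists_Icc_subset_tail {x : ι → ℝ} (hx : ∀ i, 0 ≤ x i) (hs : Summable x)
    (hI : ∃ a b, a < b ∧ Set.Icc a b ⊆ subsums x) (F : Finset ι) :
    ∃ a b, a < b ∧ 0 < a ∧ Set.Icc a b ⊆ subsums (((F : Set ι)ᶜ).indicator x) := by
  obtain ⟨a, b, hab, hsub⟩ := hI
  have hnn : ∀ i, 0 ≤ ((F : Set ι)ᶜ).indicator x i := Set.indicator_nonneg (fun i _ => hx i)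
  have hcl := (isCompact_subsums hnn (hs.indicator _)).isClosed
  have hfin : Finite (subsums ((F : Set ι).indicator x)) := finite_subsums_finset x F
  -- Baire's theorem for the cover of `ℝ` by the translates and the complement of `(a, b)`
  let f : Option (subsums ((F : Set ι).indicator x)) → Set ℝ := fun o =>
    o.elim (Set.Ioo a b)ᶜ fun φ => (fun z => z - (φ : ℝ)) ⁻¹' subsums (((F : Set ι)ᶜ).indicator x)
  have hfc : ∀ o, IsClosed (f o) := by
    rintro (_ | φ)
    · exact isOpen_Ioo.isClosed_compl
    · exact hcl.preimage (continuous_id.sub continuous_const)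
  have hfu : ⋃ o, f o = Set.univ := by
    refine Set.eq_univ_of_forall fun z => Set.mem_iUnion.2 ?_
    by_cases hz : z ∈ Set.Ioo a b
    · obtain ⟨u, hu, v, hv, huv⟩ := subsums_split hs (F : Set ι) (hsub ⟨hz.1.le, hz.2.le⟩)
      refine ⟨some ⟨u, hu⟩, ?_⟩
      change z - u ∈ subsums (((F : Set ι)ᶜ).indicator x)
      rwa [huv, add_sub_cancel_left]
    · exact ⟨none, hz⟩
  obtain ⟨z, hz, hz'⟩ := (dense_iUnion_interior_of_closed hfc hfu).inter_open_nonempty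
    (Set.Ioo a b) isOpen_Ioo (Set.nonempty_Ioo.2 hab)
  obtain ⟨o, ho⟩ := Set.mem_iUnion.1 hz'
  rcases o with _ | φ
  · exact absurd hz (interior_subset ho)
  · obtain ⟨ρ, hρ, hball⟩ := Metric.mem_nhds_iff.1 (mem_interior_iff_mem_nhds.1 ho)
    have hmem : ∀ w, |w| < ρ → z + w - φ ∈ subsums (((F : Set ι)ᶜ).indicator x) := by
      intro w hw
      exact hball (show z + w ∈ Metric.ball z ρ by simpa [Real.dist_eq] using hw)
    have h0 := subsums_nonneg hnn (hmem 0 (by simpa using hρ))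
    refine ⟨z - φ + ρ / 4, z - φ + ρ / 2, by linarith, by linarith, fun y hy => ?_⟩
    have := hmem (y - (z - φ)) (by rw [abs_lt]; constructor <;> linarith [hy.1, hy.2])
    convert this using 1
    ring

/-- The right endpoint `q` of a gap is a finite subsum, and immediately to the right of `q` the set
of subsums is the translate by `q` of the set near `0`; hence it has points of the complement and
intervals there, provided it has them near `0`. -/
theorem right_local {x : ι → ℝ} (hx : ∀ i, 0 ≤ x i) (hs : Summable x)
    (hI : ∃ a b, a < b ∧ Set.Icc a b ⊆ subsums x)
    (hG : ∀ ε > 0, ∃ t, 0 < t ∧ t < ε ∧ low x t < t) :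
    ∀ p ∈ subsums x, ∀ q ∈ subsums x, p < q → Disjoint (Set.Ioo p q) (subsums x) → ∀ ε > 0,
      (∃ y ∉ subsums x, q < y ∧ y < q + ε) ∧
        ∃ a b, a < b ∧ q < a ∧ b < q + ε ∧ Set.Icc a b ⊆ subsums x := by
  intro p hp q hq hpq hdis ε hε
  rw [Set.disjoint_left] at hdis
  obtain ⟨F, hF⟩ := exists_finset_tail_lt x (lt_min hε (sub_pos.2 hpq))
  rw [lt_min_iff] at hF
  have hnn : ∀ i, 0 ≤ ((F : Set ι)ᶜ).indicator x i := Set.indicator_nonneg (fun i _ => hx i)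
  have hqF : q ∈ subsums ((F : Set ι).indicator x) := by
    obtain ⟨u, hu, v, hv, huv⟩ := subsums_split hs (F : Set ι) hq
    have h1 := subsums_le hnn (hs.indicator _) hv
    have h2 := subsums_nonneg hnn hv
    rcases lt_or_eq_of_le (show u ≤ q by linarith) with h | h
    · exact absurd (subsums_indicator_subset _ _ hu) (hdis ⟨by linarith, h⟩)
    · exact h ▸ hu
  constructor
  · -- no other finite subsum over `F` lies within `η` to the right of `q`
    have hΦ : (subsums ((F : Set ι).indicator x) ∩ Set.Ioi q)ᶜ ∈ 𝓝 q :=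
      (((finite_subsums_finset x F).subset Set.inter_subset_left).isClosed.isOpen_compl).mem_nhds
        (fun h => lt_irrefl q h.2)
    obtain ⟨η, hη, hball⟩ := Metric.mem_nhds_iff.1 hΦ
    obtain ⟨t, ht0, ht, hlow⟩ := hG (min ε η) (lt_min hε hη)
    rw [lt_min_iff] at ht
    have hl0 := low_nonneg hx t
    have hz : (low x t + t) / 2 ∉ subsums x :=
      not_mem_subsums hx hs (t := t) (by linarith) (by linarith)
    refine ⟨q + (low x t + t) / 2, fun hmem => ?_, by linarith, by linarith⟩
    obtain ⟨u, hu, v, hv, huv⟩ := subsums_split hs (F : Set ι) hmem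
    have h1 := subsums_le hnn (hs.indicator _) hv
    have h2 := subsums_nonneg hnn hv
    have huX := subsums_indicator_subset _ _ hu
    rcases lt_trichotomy u q with h | h | h
    · exact hdis ⟨by linarith, h⟩ huX
    · apply hz
      have : (low x t + t) / 2 = v := by linarith
      rw [this]
      exact subsums_indicator_subset _ _ hv
    · refine hball (a := u) ?_ ⟨hu, h⟩
      rw [Metric.mem_ball, Real.dist_eq, abs_of_pos (by linarith)]
      linarith
  · obtain ⟨a, b, hab, ha, hsub⟩ := exists_Icc_subset_tail hx hs hI F
    have hb := subsums_le hnn (hs.indicator _) (hsub ⟨hab.le, le_rfl⟩)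
    refine ⟨q + a, q + b, by linarith, by linarith, by linarith, fun y hy => ?_⟩
    have := subsums_join hs (F : Set ι) hqF
      (hsub (show y - q ∈ Set.Icc a b from ⟨by linarith [hy.1], by linarith [hy.2]⟩))
    rwa [add_sub_cancel] at this

/-- A set of subsums that contains an interval and has gaps arbitrarily close to `0` is a
Cantorval. Left endpoints of gaps reduce to right ones by the symmetry `y ↦ ∑ x - y`. -/
theorem isCantorval_subsums {x : ι → ℝ} (hx : ∀ i, 0 ≤ x i) (hs : Summable x)
    (hI : ∃ a b, a < b ∧ Set.Icc a b ⊆ subsums x)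
    (hG : ∀ ε > 0, ∃ t, 0 < t ∧ t < ε ∧ low x t < t) :
    IsCantorval (subsums x) := by
  refine isCantorval_of_local (isCompact_subsums hx hs) ?_ hI (right_local hx hs hI hG) ?_
  · obtain ⟨a, b, hab, hsub⟩ := hI
    have ha := subsums_nonneg hx (hsub ⟨le_rfl, hab.le⟩)
    obtain ⟨t, ht0, ht, hlow⟩ := hG b (by linarith)
    have hl0 := low_nonneg hx t
    exact ⟨0, zero_mem_subsums x, b, hsub ⟨hab.le, le_rfl⟩, (low x t + t) / 2,
      not_mem_subsums hx hs (t := t) (by linarith) (by linarith), by linarith, by linarith⟩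
  · intro p hp q hq hpq hdis ε hε
    set S := ∑' i, x i
    obtain ⟨⟨y, hy, h1, h2⟩, a, b, hab, ha, hb, hsub⟩ := right_local hx hs hI hG
      (S - q) (subsums_reflect hs hq) (S - p) (subsums_reflect hs hp) (by linarith) (by
        rw [Set.disjoint_left] at hdis ⊢
        intro z hz hzX
        exact hdis (a := S - z) ⟨by linarith [hz.2], by linarith [hz.1]⟩
          (subsums_reflect hs hzX)) ε hε
    refine ⟨⟨S - y, fun h => hy ?_, by linarith, by linarith⟩, S - b, S - a, by linarith,
      by linarith, by linarith, fun z hz => ?_⟩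
    · have := subsums_reflect hs h
      rwa [sub_sub_cancel] at this
    · have := subsums_reflect hs
        (hsub (show S - z ∈ Set.Icc a b from ⟨by linarith [hz.2], by linarith [hz.1]⟩))
      rwa [sub_sub_cancel] at this

/-- If the subsums form a Cantorval, arbitrarily small terms violate Kakeya's condition: otherwise
the subsums would be a finite union of translates of an interval `[0, s]` with `s > 0`, and no
other gap would come close to the left endpoint of a gap. -/
theorem exists_small_kakeya_gap {x : ι → ℝ} (hx : ∀ i, 0 ≤ x i) (hs : Summable x)
    (hpos : ∀ t > 0, 0 < low x t) (hC : IsCantorval (subsums x)) {ε : ℝ} (hε : 0 < ε) :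
    ∃ i, x i < ε ∧ low x (x i) < x i := by
  by_contra! hcon
  have hK := kakeya_low hx hs hcon
  have hs0 := hpos ε hε
  obtain ⟨-, hcomp, ⟨G, hG⟩, -, hacc⟩ := hC
  obtain ⟨hpq, hp, hq, hGe⟩ := gap_structure hcomp.isClosed hG
  have hacc' := (hacc G hG (sInf G) (by simp)).1
  set p := sInf G
  set q := sSup G
  obtain ⟨⟨g, hg, hGg⟩, -⟩ := hG
  have hGA : ∀ z ∈ G, z ∉ subsums x := by
    intro z hz
    rw [hGg] at hz
    exact connectedComponentIn_subset _ _ hz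
  have hnn : ∀ i, 0 ≤ {j | x j < ε}.indicator x i := Set.indicator_nonneg (fun i _ => hx i)
  obtain ⟨u, hu, v, hv, huv⟩ := subsums_split hs {j | x j < ε} hp
  have hu0 := subsums_nonneg hnn hu
  have hu1 : u ≤ low x ε := subsums_le hnn (hs.indicator _) hu
  have hfill : ∀ w, 0 ≤ w → w ≤ low x ε → w + v ∈ subsums x := fun w h0 h1 =>
    subsums_join hs _ (hK ⟨h0, h1⟩) hv
  have hus : u = low x ε := by
    by_contra hne
    have hlt := lt_of_le_of_ne hu1 hne
    have hm : u < min (low x ε) (u + (q - p) / 2) := lt_min hlt (by linarith)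
    refine hGA _ ?_ (hfill (min (low x ε) (u + (q - p) / 2)) (by linarith) (min_le_left _ _))
    rw [hGe]
    have := min_le_right (low x ε) (u + (q - p) / 2)
    exact ⟨by linarith, by linarith⟩
  obtain ⟨G', ⟨⟨g', hg', hGg'⟩, -⟩, hne, y, hyG, hyb⟩ :=
    hacc' (min (low x ε) (q - p)) (lt_min hs0 (by linarith))
  rw [Metric.mem_ball, Real.dist_eq, lt_min_iff] at hyb
  have hy1 := abs_lt.1 hyb.1
  have hy2 := abs_lt.1 hyb.2
  have hyA : y ∉ subsums x := by
    rw [hGg'] at hyG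
    exact connectedComponentIn_subset _ _ hyG
  rcases le_or_gt y p with h | h
  · apply hyA
    have := hfill (y - v) (by linarith [hy1.1]) (by linarith)
    rwa [sub_add_cancel] at this
  · have hyG' : y ∈ G := by rw [hGe]; exact ⟨h, by linarith [hy2.2]⟩
    apply hne
    rw [hGg'] at hyG ⊢
    rw [hGg] at hyG' ⊢
    rw [connectedComponentIn_eq hyG, connectedComponentIn_eq hyG']

end Local

theorem low_pos {x : ℕ → ℝ} (hx : ∀ i, 0 < x i) (hs : Summable x) {t : ℝ} (ht : 0 < t) :
    0 < low x t := by
  obtain ⟨i, hi⟩ := ((tendsto_order.1 hs.tendsto_atTop_zero).2 t ht).exists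
  have := (hs.indicator {j | x j < t}).le_tsum i
    (fun j _ => Set.indicator_nonneg (fun i _ => (hx i).le) j)
  rw [Set.indicator_of_mem (show i ∈ {j | x j < t} from hi)] at this
  exact (hx i).trans_le this

/-! ### Rapidly decreasing sequences -/

/-- The sequence whose `k`-th tail sum `∑_{n ≥ k}` is `r k`, if `r` tends to `0`. -/
def diffs (r : ℕ → ℝ) (n : ℕ) : ℝ := r n - r (n + 1)

section Fast

variable {r : ℕ → ℝ}

theorem fast_tendsto (h0 : ∀ n, 0 < r n) (hr : ∀ n, 2 * r (n + 1) < r n) :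
    Tendsto r atTop (𝓝 0) := by
  have hle : ∀ n, r n ≤ r 0 * (1 / 2) ^ n := by
    intro n
    induction n with
    | zero => simp
    | succ n ih => rw [pow_succ]; linarith [hr n]
  refine squeeze_zero (fun n => (h0 n).le) hle ?_
  have := (tendsto_pow_atTop_nhds_zero_of_lt_one (r := (1 / 2 : ℝ)) (by norm_num)
    (by norm_num)).const_mul (r 0)
  simpa using this

theorem diffs_pos (h0 : ∀ n, 0 < r n) (hr : ∀ n, 2 * r (n + 1) < r n) (n : ℕ) :
    0 < diffs r n := by
  have := h0 (n + 1)
  have := hr n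
  unfold diffs; linarith

theorem tail_lt_diffs (hr : ∀ n, 2 * r (n + 1) < r n) (n : ℕ) : r (n + 1) < diffs r n := by
  have := hr n
  unfold diffs; linarith

theorem diffs_lt (h0 : ∀ n, 0 < r n) (n : ℕ) : diffs r n < r n := by
  have := h0 (n + 1)
  unfold diffs; linarith

theorem diffs_strictAnti (h0 : ∀ n, 0 < r n) (hr : ∀ n, 2 * r (n + 1) < r n) :
    StrictAnti (diffs r) :=
  strictAnti_nat_of_succ_lt fun n => (diffs_lt h0 (n + 1)).trans (tail_lt_diffs hr n)

theorem hasSum_diffs (h0 : ∀ n, 0 < r n) (hr : ∀ n, 2 * r (n + 1) < r n) (k : ℕ) :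
    HasSum (fun j => diffs r (j + k)) (r k) := by
  rw [hasSum_iff_tendsto_nat_of_nonneg (fun j => (diffs_pos h0 hr _).le)]
  have h : ∀ n, ∑ j ∈ Finset.range n, diffs r (j + k) = r k - r (n + k) := by
    intro n
    induction n with
    | zero => simp
    | succ n ih =>
      rw [Finset.sum_range_succ, ih, diffs, show n + 1 + k = n + k + 1 by ring]; ring
  simp only [h]
  have := (fast_tendsto h0 hr).comp (tendsto_add_atTop_nat k)
  simpa using this.const_sub (r k)

theorem summable_diffs (h0 : ∀ n, 0 < r n) (hr : ∀ n, 2 * r (n + 1) < r n) :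
    Summable (diffs r) := by
  simpa using (hasSum_diffs h0 hr 0).summable

theorem tsum_indicator_Ici (h0 : ∀ n, 0 < r n) (hr : ∀ n, 2 * r (n + 1) < r n) (k : ℕ) :
    ∑' i, (Set.Ici k).indicator (diffs r) i = r k := by
  rw [← (((summable_diffs h0 hr).indicator (Set.Ici k)).sum_add_tsum_nat_add k),
    Finset.sum_eq_zero, zero_add, ← (hasSum_diffs h0 hr k).tsum_eq]
  · simp [Set.indicator]
  · intro i hi
    rw [Finset.mem_range] at hi
    simp [hi]

theorem low_diffs_le (h0 : ∀ n, 0 < r n) (hr : ∀ n, 2 * r (n + 1) < r n) {t : ℝ} {k : ℕ}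
    (h : t ≤ diffs r k) : low (diffs r) t ≤ r (k + 1) := by
  rw [← tsum_indicator_Ici h0 hr (k + 1)]
  refine tsum_indicator_le_of_subset (fun i => (diffs_pos h0 hr i).le) (summable_diffs h0 hr)
    fun i hi _ => ?_
  exact (diffs_strictAnti h0 hr).lt_iff_gt.1 (lt_of_lt_of_le hi h)

theorem le_low_diffs (h0 : ∀ n, 0 < r n) (hr : ∀ n, 2 * r (n + 1) < r n) {t : ℝ} {k : ℕ}
    (h : diffs r k < t) : r k ≤ low (diffs r) t := by
  rw [← tsum_indicator_Ici h0 hr k]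
  refine tsum_indicator_le_of_subset (fun i => (diffs_pos h0 hr i).le) (summable_diffs h0 hr)
    fun i hi _ => ?_
  exact lt_of_le_of_lt ((diffs_strictAnti h0 hr).antitone hi) h

/-- Subsums are ordered lexicographically: the first index at which two index sets differ decides,
because each term exceeds the sum of all later ones. -/
theorem tsum_indicator_lt (h0 : ∀ n, 0 < r n) (hr : ∀ n, 2 * r (n + 1) < r n) {A B : Set ℕ}
    {n : ℕ} (hA : n ∈ A) (hB : n ∉ B) (hAB : ∀ i < n, i ∈ A ↔ i ∈ B) :
    ∑' i, B.indicator (diffs r) i < ∑' i, A.indicator (diffs r) i := by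
  have hs := summable_diffs h0 hr
  have hnn : ∀ i, 0 ≤ diffs r i := fun i => (diffs_pos h0 hr i).le
  have hA0 : ∑ i ∈ Finset.range n, A.indicator (diffs r) i =
      ∑ i ∈ Finset.range n, B.indicator (diffs r) i := by
    refine Finset.sum_congr rfl fun i hi => ?_
    have := hAB i (Finset.mem_range.1 hi)
    by_cases h : i ∈ A
    · rw [Set.indicator_of_mem h, Set.indicator_of_mem (this.1 h)]
    · rw [Set.indicator_of_notMem h, Set.indicator_of_notMem (mt this.2 h)]
  have h1 := (hs.indicator A).sum_add_tsum_nat_add (n + 1)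
  have h2 := (hs.indicator B).sum_add_tsum_nat_add (n + 1)
  rw [Finset.sum_range_succ, hA0, Set.indicator_of_mem hA] at h1
  rw [Finset.sum_range_succ, Set.indicator_of_notMem hB] at h2
  have h3 : 0 ≤ ∑' i, A.indicator (diffs r) (i + (n + 1)) :=
    tsum_nonneg fun i => Set.indicator_nonneg (fun i _ => hnn i) _
  have h4 : ∑' i, B.indicator (diffs r) (i + (n + 1)) ≤ r (n + 1) := by
    rw [← (hasSum_diffs h0 hr (n + 1)).tsum_eq]
    exact ((summable_nat_add_iff (n + 1)).2 (hs.indicator B)).tsum_le_tsum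
      (fun i => Set.indicator_le_self' (fun j _ => hnn j) _) (hasSum_diffs h0 hr (n + 1)).summable
  have := tail_lt_diffs hr n
  linarith

/-- The subsums are the injective continuous image of `ℕ → Bool`, which is compact and homeomorphic
to the Cantor ternary set. -/
theorem isCantorSet_subsums_diffs (h0 : ∀ n, 0 < r n) (hr : ∀ n, 2 * r (n + 1) < r n) :
    IsCantorSet (subsums (diffs r)) := by
  have hcont := continuous_boolSum (fun i => (diffs_pos h0 hr i).le) (summable_diffs h0 hr)
  have hinj : Function.Injective
      fun b : ℕ → Bool => ∑' i, {j | b j = true}.indicator (diffs r) i := by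
    classical
    intro b b' hbb
    by_contra hne
    have hex : ∃ n, b n ≠ b' n := Function.ne_iff.1 hne
    have hmin : ∀ i < Nat.find hex, b i = b' i := fun i hi => not_not.1 (Nat.find_min hex hi)
    have hn := Nat.find_spec hex
    dsimp only at hbb
    rcases hb : b (Nat.find hex) with _ | _
    · have hb' : b' (Nat.find hex) = true := by
        rw [hb] at hn
        simpa using hn.symm
      refine (tsum_indicator_lt h0 hr (A := {j | b' j = true}) (B := {j | b j = true})
        (n := Nat.find hex) hb' (fun h => ?_) (fun i hi => ?_)).ne hbb
      · have h' : b (Nat.find hex) = true := h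
        rw [hb] at h'; exact Bool.false_ne_true h'
      · change b' i = true ↔ b i = true
        rw [hmin i hi]
    · refine (tsum_indicator_lt h0 hr (A := {j | b j = true}) (B := {j | b' j = true})
        (n := Nat.find hex) hb (fun h => ?_) (fun i hi => ?_)).ne hbb.symm
      · have h' : b' (Nat.find hex) = true := h
        rw [hb, h'] at hn; exact hn rfl
      · change b i = true ↔ b' i = true
        rw [hmin i hi]
  rw [IsCantorSet, subsums_eq_range]
  exact ⟨((hcont.isClosedEmbedding hinj).toIsEmbedding.toHomeomorph.symm).trans
    cantorSetHomeomorphNatToBool.symm⟩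

end Fast

/-- Dependent choice of a sequence of tail sums that more than halve at each step. -/
theorem exists_fast_seq {P : ℝ → ℝ → Prop} {r₀ : ℝ} (hr₀ : 0 < r₀)
    (h : ∀ ρ > 0, ∃ ρ', 0 < ρ' ∧ 2 * ρ' < ρ ∧ P ρ ρ') :
    ∃ r : ℕ → ℝ, r 0 = r₀ ∧ (∀ n, 0 < r n) ∧ (∀ n, 2 * r (n + 1) < r n) ∧
      ∀ n, P (r n) (r (n + 1)) := by
  choose! f hf using h
  have hpos : ∀ n, 0 < f^[n] r₀ := by
    intro n
    induction n with
    | zero => exact hr₀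
    | succ n ih => rw [Function.iterate_succ_apply']; exact (hf _ ih).1
  refine ⟨fun n => f^[n] r₀, rfl, hpos, fun n => ?_, fun n => ?_⟩
  · dsimp only
    rw [Function.iterate_succ_apply']; exact (hf _ (hpos n)).2.1
  · dsimp only
    rw [Function.iterate_succ_apply']; exact (hf _ (hpos n)).2.2

/-! ### The two constructions -/

/-- The tails of `c` are chosen so small that infinitely many of the Kakeya gaps `(low x t, t)` of
`x` are not filled when `c` is adjoined. -/
theorem exists_cantorval_sum {x : ℕ → ℝ} (hx : ∀ n, 0 < x n) (hs : Summable x)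
    (hC : IsCantorval (subsums x)) :
    ∃ c : ℕ → ℝ, (∀ n, 0 < c n) ∧ Summable c ∧ IsCantorSet (subsums c) ∧
      IsCantorval (subsums x + subsums c) := by
  have hx' : ∀ n, 0 ≤ x n := fun n => (hx n).le
  obtain ⟨r, -, h0, hr, hP⟩ := exists_fast_seq
    (P := fun ρ ρ' => ∃ i, x i ≤ ρ - ρ' ∧ low x (x i) + ρ' < x i) one_pos (by
      intro ρ hρ
      obtain ⟨i, hi, hlow⟩ := exists_small_kakeya_gap hx' hs (fun t ht => low_pos hx hs ht) hC
        (half_pos hρ)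
      have h1 := min_le_left (ρ / 4) ((x i - low x (x i)) / 2)
      have h2 := min_le_right (ρ / 4) ((x i - low x (x i)) / 2)
      exact ⟨min (ρ / 4) ((x i - low x (x i)) / 2), lt_min (by linarith) (by linarith),
        by linarith, i, by linarith, by linarith⟩)
  have hc := summable_diffs h0 hr
  refine ⟨diffs r, diffs_pos h0 hr, hc, isCantorSet_subsums_diffs h0 hr, ?_⟩
  rw [← subsums_sumElim hs hc]
  refine isCantorval_subsums ?_ (summable_sumElim hs hc) ?_ fun ε hε => ?_
  · rintro (n | n)
    · exact hx' n
    · exact (diffs_pos h0 hr n).le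
  · obtain ⟨a, b, hab, hI⟩ := exists_Icc_subset_of_isCantorval hC
    refine ⟨a, b, hab, fun y hy => ?_⟩
    rw [subsums_sumElim hs hc]
    exact ⟨y, hI hy, 0, zero_mem_subsums _, add_zero y⟩
  · obtain ⟨n, hn⟩ := ((tendsto_order.1 (fast_tendsto h0 hr)).2 ε hε).exists
    obtain ⟨i, hi, hlow⟩ := hP n
    refine ⟨x i, hx i, by linarith [h0 (n + 1)], ?_⟩
    rw [low_sumElim hs hc]
    have := low_diffs_le h0 hr (show x i ≤ diffs r n from hi)
    linarith

/-- Each term of `c` exceeds its tail `r (n + 1)`, but by at most the sum of the terms of `x`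
below that tail; then `x` and `c` together satisfy Kakeya's condition. -/
theorem exists_interval_sum {x : ℕ → ℝ} (hx : ∀ n, 0 < x n) (hs : Summable x) :
    ∃ c : ℕ → ℝ, (∀ n, 0 < c n) ∧ Summable c ∧ IsCantorSet (subsums c) ∧
      ∃ a b, a < b ∧ subsums x + subsums c = Set.Icc a b := by
  have hx' : ∀ n, 0 ≤ x n := fun n => (hx n).le
  have hS : 0 ≤ ∑' n, x n := tsum_nonneg hx'
  obtain ⟨r, hr0, h0, hr, hP⟩ := exists_fast_seq
    (P := fun ρ ρ' => ρ - 2 * ρ' ≤ low x ρ') (r₀ := ∑' n, x n + 1) (by linarith) (by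
      intro ρ hρ
      -- the halving defect `m` is bounded by `low x (ρ / 4) ≤ low x ρ'`
      set m := min (low x (ρ / 4)) (ρ / 2) with hm
      have hm0 : 0 < m := lt_min (low_pos hx hs (by linarith)) (by linarith)
      have h1 : m ≤ low x (ρ / 4) := min_le_left _ _
      have h2 : m ≤ ρ / 2 := min_le_right _ _
      have h3 : low x (ρ / 4) ≤ low x ((ρ - m) / 2) := low_mono hx' hs (by linarith)
      exact ⟨(ρ - m) / 2, by linarith, by linarith, by linarith⟩)
  have hc := summable_diffs h0 hr
  have hcpos := diffs_pos h0 hr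
  have hnn : ∀ i, 0 ≤ Sum.elim x (diffs r) i := by
    rintro (n | n)
    · exact hx' n
    · exact (hcpos n).le
  refine ⟨diffs r, hcpos, hc, isCantorSet_subsums_diffs h0 hr, 0, ∑' i, Sum.elim x (diffs r) i,
    (summable_sumElim hs hc).tsum_pos hnn (Sum.inl 0) (hx 0), ?_⟩
  rw [← subsums_sumElim hs hc]
  refine kakeya hnn (summable_sumElim hs hc) ?_
  have hgap : ∀ n, diffs r n ≤ r (n + 1) + low x (r (n + 1)) := fun n => by
    have : r n - 2 * r (n + 1) ≤ low x (r (n + 1)) := hP n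
    unfold diffs; linarith
  rintro (i | n) <;> rw [low_sumElim hs hc]
  · simp only [Sum.elim_inl]
    have hex : ∃ n, r n < x i := ((tendsto_order.1 (fast_tendsto h0 hr)).2 _ (hx i)).exists
    classical
    have hspec := Nat.find_spec hex
    -- the first tail below `x i` has positive index, since `r 0` exceeds every term of `x`
    obtain ⟨n, hn⟩ : ∃ n, Nat.find hex = n + 1 := by
      refine Nat.exists_eq_succ_of_ne_zero fun h => ?_
      rw [h, hr0] at hspec
      have := hs.le_tsum i (fun j _ => hx' j)
      linarith
    have hprev : x i ≤ r n := not_lt.1 (Nat.find_min hex (by omega))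
    rw [hn] at hspec
    rcases lt_or_ge (diffs r n) (x i) with h | h
    · have := le_low_diffs h0 hr h
      have := low_nonneg hx' (x i)
      linarith
    · have h1 := le_low_diffs h0 hr ((diffs_lt h0 (n + 1)).trans hspec)
      have h2 := low_mono hx' hs hspec.le
      have := hgap n
      linarith
  · simp only [Sum.elim_inr]
    have h1 := le_low_diffs h0 hr (diffs_strictAnti h0 hr (Nat.lt_succ_self n))
    have h2 := low_mono hx' hs (tail_lt_diffs hr n).le
    have := hgap n
    simp only [Nat.succ_eq_add_one] at h1
    linarith

/-- (Marchwicki–Nowakowski–Prus-Wiśniowski) For every achievable Cantorval `D` there are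
achievable Cantor sets `E(c)` and `E(c')` such that `D + E(c)` is a Cantorval and
`D + E(c')` is a nondegenerate compact interval. -/
theorem cantorval_plus_cantor (d : ℕ → ℝ)
    (hdpos : ∀ n, 1 ≤ n → 0 < d n) (hdsum : Summable d)
    (hD : IsCantorval (achievementSet d)) :
    ∃ c c' : ℕ → ℝ,
      (∀ n, 1 ≤ n → 0 < c n) ∧ (∀ n, 1 ≤ n → 0 < c' n) ∧
      Summable c ∧ Summable c' ∧
      IsCantorSet (achievementSet c) ∧ IsCantorSet (achievementSet c') ∧
      IsCantorval (achievementSet d + achievementSet c) ∧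
      (∃ a b : ℝ, a < b ∧ achievementSet d + achievementSet c' = Set.Icc a b) := by
  have hs : Summable fun n => d (n + 1) := (summable_nat_add_iff 1).2 hdsum
  have hx : ∀ n, 0 < d (n + 1) := fun n => hdpos _ (by omega)
  have hshift : ∀ {c : ℕ → ℝ}, Summable c → Summable fun n => c (n - 1) := fun {c} hc =>
    (summable_nat_add_iff 1).1 (by simpa using hc)
  rw [achievementSet_eq_subsums hdsum] at hD
  obtain ⟨c, hc, hcs, hcC, hcV⟩ := exists_cantorval_sum hx hs hD
  obtain ⟨c', hc', hcs', hcC', hcI⟩ := exists_interval_sum hx hs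
  refine ⟨fun n => c (n - 1), fun n => c' (n - 1), fun n _ => hc _, fun n _ => hc' _,
    hshift hcs, hshift hcs', ?_⟩
  rw [achievementSet_eq_subsums hdsum, achievementSet_eq_subsums (hshift hcs),
    achievementSet_eq_subsums (hshift hcs')]
  simp only [Nat.add_sub_cancel]
  exact ⟨hcC, hcC', hcV, hcI⟩
end

section
/- Let α : ℕ → ℝ be defined by α(k) := (1/2)·(3^{−(k−1)²} − 3^{−k²}) for k ≥ 1. Then α is fast convergent (α(k) > ∑_{i > k} α(i) for all k), the achievement set E(α) is a Cantor set of Hausdorff dimension 0, and E(α) + E(α) is also a Cantor set. In particular, there exists an achievable Cantor set C of Hausdorff dimension 0 such that C + C is a Cantor set. -/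
/-!
The `k`-th tail of the series telescopes to `3 ^ (-k²) / 2` (`hasSum_term_add`), which gives fast
convergence by comparison with the `k`-th term (`remainder_eq`).

Fixing the first `k` digits of both summands covers `E(α) + E(α)` by `4 ^ k` intervals of length
`3 ^ (-k²)`. For every `s > 0` the sums `4 ^ k * 3 ^ (-s k²)` are bounded, so `E(α) + E(α)` has
Hausdorff dimension zero (`dimH_range_subsum_add`), and so has its subset `E(α)`. A set of reals of
dimension zero has empty interior.

Both sets are compact, as `E(α)` is a continuous image of `ℕ → Bool`, and have no isolated points,
since flipping a late digit changes a subsum by a small nonzero amount. It remains to know that a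
nonempty compact set of reals without isolated points and without interior is homeomorphic to the
Cantor set (`isCantorSet_of_compact_preperfect`). Such a set can be cut at a point of its complement
in the middle third of its convex hull; iterating gives a binary scheme of clopen pieces whose
diameters shrink by a factor `2 / 3` at each step, and following its branches is a homeomorphism
from `ℕ → Bool`. This criterion is needed for `E(α) + E(α)`, whose digit expansion with digits
`0, 1, 2` is not unique: `α 1 = 2 * ∑_{i > 1} α i`.
-/


open Set Filter Topology MeasureTheory
open scoped Pointwise

/-! ### Cantor sets in the line -/

/-- The invariant carried along the splitting of a Cantor set in `ℝ`: `P` is a nonempty compact set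
without isolated points and without interior, whose diameter is at most `d`. -/
structure IsCantorPiece (d : ℝ) (P : Set ℝ) : Prop where
  compact : IsCompact P
  preperfect : Preperfect P
  nonempty : P.Nonempty
  interior_eq : interior P = ∅
  sub_le : ∀ x ∈ P, ∀ y ∈ P, x - y ≤ d

/-- Cutting a piece at a point of its complement lying in the middle third of its convex hull
yields two disjoint pieces, each smaller by a factor `2 / 3`. -/
lemma IsCantorPiece.split {d : ℝ} {P : Set ℝ} (h : IsCantorPiece d P) :
    ∃ P₀ P₁ : Set ℝ, IsCantorPiece (2 / 3 * d) P₀ ∧ IsCantorPiece (2 / 3 * d) P₁ ∧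
      Disjoint P₀ P₁ ∧ P₀ ∪ P₁ = P := by
  obtain ⟨a, ha, hamin⟩ := h.compact.exists_isLeast h.nonempty
  obtain ⟨b, hb, hbmax⟩ := h.compact.exists_isGreatest h.nonempty
  have hab : a < b := by
    obtain ⟨y, ⟨-, hy⟩, hya⟩ := preperfect_iff_nhds.1 h.preperfect a ha univ univ_mem
    exact (lt_of_le_of_ne (hamin hy) hya.symm).trans_le (hbmax hy)
  have hd := h.sub_le b hb a ha
  obtain ⟨c, hc, hcP⟩ : ∃ c ∈ Ioo (a + (b - a) / 3) (b - (b - a) / 3), c ∉ P := by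
    by_contra! hcon
    have hsub : Ioo (a + (b - a) / 3) (b - (b - a) / 3) ⊆ interior P :=
      interior_maximal hcon isOpen_Ioo
    rw [h.interior_eq] at hsub
    exact hsub (show (a + b) / 2 ∈ _ from ⟨by linarith, by linarith⟩)
  obtain ⟨hc1, hc2⟩ := hc
  have e0 : Iio c ∩ P = Iic c ∩ P := by
    ext x
    refine ⟨fun hx => ⟨mem_Iic.2 (le_of_lt hx.1), hx.2⟩,
      fun hx => ⟨mem_Iio.2 (lt_of_le_of_ne hx.1 ?_), hx.2⟩⟩
    rintro rfl
    exact hcP hx.2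
  have e1 : Ioi c ∩ P = Ici c ∩ P := by
    ext x
    refine ⟨fun hx => ⟨mem_Ici.2 (le_of_lt hx.1), hx.2⟩,
      fun hx => ⟨mem_Ioi.2 (lt_of_le_of_ne hx.1 ?_), hx.2⟩⟩
    rintro rfl
    exact hcP hx.2
  refine ⟨Iio c ∩ P, Ioi c ∩ P, ⟨?_, ?_, ⟨a, ?_, ha⟩, ?_, ?_⟩, ⟨?_, ?_, ⟨b, ?_, hb⟩, ?_, ?_⟩,
    ?_, ?_⟩
  · rw [e0]
    exact h.compact.inter_left isClosed_Iic
  · exact h.preperfect.open_inter isOpen_Iio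
  · show a < c
    linarith
  · exact subset_empty_iff.1 (h.interior_eq ▸ interior_mono inter_subset_right)
  · rintro x ⟨hx, -⟩ y ⟨-, hy⟩
    have := hamin hy
    have : x < c := hx
    linarith
  · rw [e1]
    exact h.compact.inter_left isClosed_Ici
  · exact h.preperfect.open_inter isOpen_Ioi
  · show c < b
    linarith
  · exact subset_empty_iff.1 (h.interior_eq ▸ interior_mono inter_subset_right)
  · rintro x ⟨-, hx⟩ y ⟨hy, -⟩
    have := hbmax hx
    have : c < y := hy
    linarith
  · rw [Set.disjoint_left]
    rintro x ⟨hx, -⟩ ⟨hx', -⟩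
    exact lt_asymm (mem_Iio.1 hx) (mem_Ioi.1 hx')
  · ext x
    constructor
    · rintro (hx | hx) <;> exact hx.2
    · intro hx
      rcases lt_trichotomy x c with hxc | rfl | hxc
      · exact Or.inl ⟨hxc, hx⟩
      · exact absurd hx hcP
      · exact Or.inr ⟨hxc, hx⟩

open CantorScheme in
/-- Brouwer's characterization of the Cantor set, for subsets of the line. -/
lemma isCantorSet_of_compact_preperfect {A : Set ℝ} (hcomp : IsCompact A) (hperf : Preperfect A)
    (hne : A.Nonempty) (hint : interior A = ∅) : IsCantorSet A := by
  have hA : IsCantorPiece (Metric.diam A) A := by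
    refine ⟨hcomp, hperf, hne, hint, fun x hx y hy => ?_⟩
    exact (le_abs_self _).trans (Metric.dist_le_diam_of_mem hcomp.isBounded hx hy)
  have hsplit : ∀ (d : ℝ) (P : Set ℝ), ∃ F : Bool → Set ℝ, IsCantorPiece d P →
      (∀ b, IsCantorPiece (2 / 3 * d) (F b)) ∧ Disjoint (F false) (F true) ∧
        F false ∪ F true = P := by
    intro d P
    by_cases h : IsCantorPiece d P
    · obtain ⟨P₀, P₁, h₀, h₁, hd, hu⟩ := h.split
      refine ⟨fun b => cond b P₁ P₀, fun _ => ⟨?_, hd, hu⟩⟩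
      rintro (_ | _)
      exacts [h₀, h₁]
    · exact ⟨fun _ => ∅, fun h' => absurd h' h⟩
  choose F hF using hsplit
  let D : List Bool → Set ℝ := fun l =>
    List.rec A (fun b l' P => F ((2 / 3) ^ l'.length * Metric.diam A) P b) l
  have hDcons : ∀ b l, D (b :: l) = F ((2 / 3) ^ l.length * Metric.diam A) (D l) b :=
    fun _ _ => rfl
  have hD : ∀ l, IsCantorPiece ((2 / 3) ^ l.length * Metric.diam A) (D l) := by
    intro l
    induction l with
    | nil => simpa using hA
    | cons b l ih =>
      rw [hDcons, List.length_cons, pow_succ', mul_assoc]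
      exact (hF _ _ ih).1 b
  have hDunion : ∀ l, D (false :: l) ∪ D (true :: l) = D l := fun l => (hF _ _ (hD l)).2.2
  have hanti : ClosureAntitone D := by
    refine Antitone.closureAntitone ?_ fun l => (hD l).compact.isClosed
    rintro l (_ | _)
    · exact subset_union_left.trans (hDunion l).subset
    · exact subset_union_right.trans (hDunion l).subset
  have hdisj : CantorScheme.Disjoint D := by
    rintro l (_ | _) (_ | _) hab <;> try contradiction
    · exact (hF _ _ (hD l)).2.1
    · exact (hF _ _ (hD l)).2.1.symm
  have hdiam : VanishingDiam D := by
    intro x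
    have hlim : Tendsto (fun n : ℕ => ENNReal.ofReal ((2 / 3) ^ n * Metric.diam A)) atTop (𝓝 0) := by
      rw [← ENNReal.ofReal_zero]
      refine ENNReal.tendsto_ofReal ?_
      simpa using (tendsto_pow_atTop_nhds_zero_of_lt_one (r := (2 / 3 : ℝ)) (by norm_num)
        (by norm_num)).mul_const (Metric.diam A)
    refine tendsto_of_tendsto_of_tendsto_of_le_of_le tendsto_const_nhds hlim (fun _ => zero_le)
      fun n => ?_
    refine Metric.ediam_le fun y hy z hz => ?_
    rw [edist_dist]
    refine ENNReal.ofReal_le_ofReal ?_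
    have h := (hD (PiNat.res x n)).sub_le
    rw [PiNat.res_length] at h
    rw [Real.dist_eq]
    exact abs_sub_le_iff.2 ⟨h y hy z hz, h z hz y hy⟩
  have hdom : ∀ x : ℕ → Bool, x ∈ (inducedMap D).1 := fun x => by
    rw [hanti.map_of_vanishingDiam hdiam fun l => (hD l).nonempty]
    exact mem_univ x
  let f : (ℕ → Bool) → A := fun x => ⟨(inducedMap D).2 ⟨x, hdom x⟩, map_mem ⟨x, hdom x⟩ 0⟩
  have hfc : Continuous f :=
    (hdiam.map_continuous.comp (by fun_prop)).subtype_mk _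
  have hfi : Function.Injective f := fun x y hxy => by
    have h := hdisj.map_injective (a₁ := ⟨x, hdom x⟩) (a₂ := ⟨y, hdom y⟩)
      (congrArg Subtype.val hxy)
    exact congrArg Subtype.val h
  have hfs : Function.Surjective f := by
    classical
    rintro ⟨y, hy⟩
    -- the address of `y`, followed down the scheme
    let L : ℕ → List Bool := fun n => Nat.rec [] (fun _ l => decide (y ∈ D (true :: l)) :: l) n
    let x : ℕ → Bool := fun n => decide (y ∈ D (true :: L n))
    have hL : ∀ n, L (n + 1) = x n :: L n := fun _ => rfl
    have hres : ∀ n, PiNat.res x n = L n := by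
      intro n
      induction n with
      | zero => rfl
      | succ n ih => rw [PiNat.res_succ, hL, ih]
    have hmem : ∀ n, y ∈ D (L n) := by
      intro n
      induction n with
      | zero => exact hy
      | succ n ih =>
        rw [hL]
        by_cases ht : y ∈ D (true :: L n)
        · have : x n = true := decide_eq_true ht
          rwa [this]
        · have : x n = false := decide_eq_false ht
          rw [this]
          rw [← hDunion] at ih
          exact ih.resolve_right ht
    refine ⟨x, Subtype.ext (dist_le_zero.1 (le_of_forall_pos_lt_add fun ε hε => ?_))⟩
    obtain ⟨n, hn⟩ := hdiam.dist_lt ε hε x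
    rw [zero_add]
    exact hn _ (map_mem ⟨x, hdom x⟩ n) _ (by rw [hres]; exact hmem n)
  have e : (ℕ → Bool) ≃ₜ A :=
    Continuous.homeoOfEquivCompactToT2 (f := Equiv.ofBijective f ⟨hfi, hfs⟩) hfc
  exact ⟨e.symm.trans cantorSetHomeomorphNatToBool.symm⟩

lemma Preperfect.add_right {A B : Set ℝ} (hA : Preperfect A) : Preperfect (A + B) := by
  rw [preperfect_iff_nhds] at *
  rintro _ ⟨a, ha, b, hb, rfl⟩ U hU
  have hc : Tendsto (fun t => t + b) (𝓝 a) (𝓝 (a + b)) := (continuous_add_const b).tendsto a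
  obtain ⟨y, ⟨hyU, hyA⟩, hya⟩ := hA a ha _ (hc hU)
  exact ⟨y + b, ⟨hyU, add_mem_add hyA hb⟩, fun h => hya (add_right_cancel h)⟩

/-! ### Hausdorff dimension zero -/

lemma tendsto_one_div_three_pow_sq :
    Tendsto (fun k : ℕ => (1 : ℝ) / 3 ^ (k ^ 2)) atTop (𝓝 0) := by
  have h := (tendsto_pow_atTop_nhds_zero_of_lt_one (r := (1 / 3 : ℝ)) (by norm_num)
    (by norm_num)).comp (tendsto_pow_atTop (α := ℕ) two_ne_zero)
  simpa [Function.comp_def] using h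

/-- A set covered, for every `k`, by `4 ^ k` sets of diameter at most `3 ^ (-k²)` has dimension
zero: for `s > 0`, the sums `4 ^ k * 3 ^ (-s k²)` stay bounded. -/
lemma dimH_eq_zero_of_cover {S : Set ℝ} {ι : ℕ → Type} [∀ k, Fintype (ι k)]
    (hcard : ∀ k, Fintype.card (ι k) = 4 ^ k) (t : ∀ k, ι k → Set ℝ)
    (ht : ∀ k i, Metric.ediam (t k i) ≤ ENNReal.ofReal (1 / 3 ^ (k ^ 2)))
    (hS : ∀ k, S ⊆ ⋃ i, t k i) : dimH S = 0 := by
  refine le_antisymm (ENNReal.le_of_forall_pos_le_add fun s hs _ => ?_) zero_le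
  rw [zero_add]
  refine dimH_le_of_hausdorffMeasure_ne_top (ne_top_of_le_ne_top ENNReal.one_ne_top ?_)
  have hlim : Tendsto (fun k : ℕ => ENNReal.ofReal (1 / 3 ^ (k ^ 2))) atTop (𝓝 0) := by
    rw [← ENNReal.ofReal_zero]
    exact ENNReal.tendsto_ofReal tendsto_one_div_three_pow_sq
  refine (Measure.hausdorffMeasure_le_liminf_sum (s : ℝ) S _ hlim t (.of_forall ht)
    (.of_forall hS)).trans ?_
  refine liminf_le_of_le (by isBoundedDefault) fun b hb => ?_
  obtain ⟨k, hbk, hk⟩ := (hb.and (eventually_ge_atTop ⌈2 / (s : ℝ)⌉₊)).exists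
  refine hbk.trans ?_
  have hs' : (0 : ℝ) < s := hs
  have hk' : 2 ≤ k * (s : ℝ) := by
    have := (Nat.le_ceil (2 / (s : ℝ))).trans (Nat.cast_le.2 hk)
    rwa [div_le_iff₀ hs'] at this
  have hterm : ∀ i, Metric.ediam (t k i) ^ (s : ℝ) ≤ ENNReal.ofReal (1 / 9 ^ k) := by
    intro i
    refine (ENNReal.rpow_le_rpow (ht k i) hs'.le).trans ?_
    rw [ENNReal.ofReal_rpow_of_nonneg (by positivity) hs'.le]
    refine ENNReal.ofReal_le_ofReal ?_
    rw [Real.div_rpow (by positivity) (by positivity), Real.one_rpow]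
    refine one_div_le_one_div_of_le (by positivity) ?_
    have h9 : (9 : ℝ) ^ k = (3 : ℝ) ^ (2 * k : ℝ) := by
      rw [Real.rpow_mul (by norm_num), Real.rpow_natCast]
      norm_num
    rw [h9, ← Real.rpow_natCast, ← Real.rpow_mul (by norm_num)]
    refine Real.rpow_le_rpow_of_exponent_le (by norm_num) ?_
    push_cast
    have : (0 : ℝ) ≤ k := k.cast_nonneg
    nlinarith
  calc ∑ i, Metric.ediam (t k i) ^ (s : ℝ) ≤ ∑ _i : ι k, ENNReal.ofReal (1 / 9 ^ k) :=
        Finset.sum_le_sum fun i _ => hterm i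
    _ = ENNReal.ofReal (4 ^ k * (1 / 9 ^ k)) := by
        rw [Finset.sum_const, Finset.card_univ, hcard, nsmul_eq_mul,
          ENNReal.ofReal_mul (by positivity)]
        congr 1
        rw [ENNReal.ofReal_pow (by norm_num)]
        simp
    _ ≤ 1 := by
        rw [ENNReal.ofReal_le_one, mul_one_div, ← div_pow]
        exact pow_le_one₀ (by norm_num) (by norm_num)

lemma interior_eq_empty_of_dimH_eq_zero {S : Set ℝ} (h : dimH S = 0) : interior S = ∅ := by
  by_contra hne
  have h1 := Real.dimH_of_nonempty_interior (nonempty_iff_ne_empty.2 hne)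
  rw [h] at h1
  simp at h1

/-! ### The series and its subsums -/

/-- The terms `α (i + 1)`, reindexed from `i = 0`. -/
noncomputable def shiftedTerm (i : ℕ) : ℝ := (1 / 2) * (1 / 3 ^ (i ^ 2) - 1 / 3 ^ ((i + 1) ^ 2))

/-- The subsum of `∑ shiftedTerm i` selected by a `0`-`1` sequence. -/
noncomputable def subsum (ε : ℕ → Bool) : ℝ := ∑' i, if ε i then shiftedTerm i else 0

lemma term_pos (i : ℕ) : 0 < shiftedTerm i := by
  have : (1 : ℝ) / 3 ^ ((i + 1) ^ 2) < 1 / 3 ^ (i ^ 2) :=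
    one_div_lt_one_div_of_lt (by positivity)
      (pow_lt_pow_right₀ (by norm_num) (Nat.pow_lt_pow_left i.lt_succ_self two_ne_zero))
  unfold shiftedTerm
  linarith

/-- The tails of the series telescope. -/
lemma hasSum_term_add (k : ℕ) : HasSum (fun i => shiftedTerm (i + k))
    (1 / 2 * (1 / 3 ^ (k ^ 2))) := by
  rw [hasSum_iff_tendsto_nat_of_nonneg fun i => (term_pos _).le]
  have hsum : ∀ n, ∑ i ∈ Finset.range n, shiftedTerm (i + k)
      = 1 / 2 * (1 / 3 ^ (k ^ 2) - 1 / 3 ^ ((n + k) ^ 2)) := by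
    intro n
    induction n with
    | zero => simp
    | succ n ih =>
      rw [Finset.sum_range_succ, ih, shiftedTerm, show n + 1 + k = n + k + 1 by ring]
      ring
  simp_rw [hsum]
  have h := (tendsto_add_atTop_iff_nat k).2 tendsto_one_div_three_pow_sq
  have h' := (h.const_sub ((1 : ℝ) / 3 ^ (k ^ 2))).const_mul (1 / 2)
  rwa [sub_zero] at h'

lemma summable_term : Summable shiftedTerm := by
  simpa using (hasSum_term_add 0).summable

lemma ite_term_nonneg (b : Bool) (i : ℕ) : 0 ≤ if b then shiftedTerm i else 0 := by
  cases b <;> simp [(term_pos i).le]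

lemma ite_term_le (b : Bool) (i : ℕ) : (if b then shiftedTerm i else 0) ≤ shiftedTerm i := by
  cases b <;> simp [(term_pos i).le]

lemma summable_ite_term (ε : ℕ → Bool) : Summable fun i => if ε i then shiftedTerm i else 0 :=
  summable_term.of_nonneg_of_le (fun i => ite_term_nonneg _ i) fun i => ite_term_le _ i

lemma continuous_subsum : Continuous subsum := by
  refine continuous_tsum (fun i => ?_) summable_term fun i ε => ?_
  · exact (continuous_of_discreteTopology (f := fun b : Bool => if b then shiftedTerm i else 0)).comp
      (continuous_apply i)
  · rw [Real.norm_of_nonneg (ite_term_nonneg _ i)]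
    exact ite_term_le _ i

/-- Flipping the `n`-th digit changes a subsum by `± shiftedTerm n`, which is nonzero and tends
to `0`. -/
lemma preperfect_range_subsum : Preperfect (range subsum) := by
  rw [preperfect_iff_nhds]
  rintro _ ⟨ε, rfl⟩ U hU
  have hflip : Tendsto (fun n => Function.update ε n (!ε n)) atTop (𝓝 ε) := by
    refine tendsto_pi_nhds.2 fun i => tendsto_const_nhds.congr' ?_
    filter_upwards [eventually_gt_atTop i] with n hn
    rw [Function.update_of_ne hn.ne]
  obtain ⟨n, hn⟩ := (((continuous_subsum.tendsto ε).comp hflip).eventually_mem hU).exists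
  refine ⟨_, ⟨hn, mem_range_self _⟩, fun heq => ?_⟩
  have h1 := (summable_ite_term ε).hasSum.update n
      (if !ε n then shiftedTerm n else 0)
  have h2 : Function.update (fun i => if ε i then shiftedTerm i else 0) n
      (if !ε n then shiftedTerm n else 0)
      = fun i => if Function.update ε n (!ε n) i then shiftedTerm i else 0 := by
    ext i
    by_cases hi : i = n
    · subst hi
      simp
    · simp [Function.update_of_ne hi]
  rw [h2] at h1
  have h3 : subsum (Function.update ε n (!ε n)) = _ := h1.tsum_eq
  have h4 : subsum (Function.update ε n (!ε n)) = subsum ε := heq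
  have h5 := term_pos n
  rw [h4] at h3
  unfold subsum at h3
  cases hε : ε n <;> simp [hε] at h3 <;> linarith

lemma subsum_mem_Icc (k : ℕ) (ε : ℕ → Bool) :
    subsum ε ∈ Icc (∑ i : Fin k, if ε i then shiftedTerm i else 0)
      ((∑ i : Fin k, if ε i then shiftedTerm i else 0) + 1 / 2 * (1 / 3 ^ (k ^ 2))) := by
  have h := (summable_ite_term ε).sum_add_tsum_nat_add k
  rw [Finset.sum_range] at h
  have h0 : 0 ≤ ∑' i, if ε (i + k) then shiftedTerm (i + k) else 0 :=
    tsum_nonneg fun i => ite_term_nonneg _ _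
  have h1 : (∑' i, if ε (i + k) then shiftedTerm (i + k) else 0) ≤ 1 / 2 * (1 / 3 ^ (k ^ 2)) := by
    rw [← (hasSum_term_add k).tsum_eq]
    exact ((summable_nat_add_iff k).2 (summable_ite_term ε)).tsum_le_tsum
      (fun i => ite_term_le _ _) (hasSum_term_add k).summable
  unfold subsum
  constructor <;> linarith

/-- Fixing the first `k` digits of both summands covers the sumset by `4 ^ k` intervals of
length `3 ^ (-k²)`. -/
lemma dimH_range_subsum_add : dimH (range subsum + range subsum) = 0 := by
  let σ : ∀ k : ℕ, (Fin k → Bool) → ℝ := fun k w => ∑ i : Fin k, if w i then shiftedTerm i else 0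
  refine dimH_eq_zero_of_cover (ι := fun k => (Fin k → Bool) × (Fin k → Bool)) (fun k => ?_)
    (fun k w => Icc (σ k w.1 + σ k w.2) (σ k w.1 + σ k w.2 + 1 / 3 ^ (k ^ 2))) (fun k w => ?_)
    fun k => ?_
  · rw [Fintype.card_prod]
    simp [← mul_pow]
  · rw [Real.ediam_Icc, add_sub_cancel_left]
  · rintro _ ⟨_, ⟨ε, rfl⟩, _, ⟨δ, rfl⟩, rfl⟩
    obtain ⟨h1, h2⟩ := subsum_mem_Icc k ε
    obtain ⟨h3, h4⟩ := subsum_mem_Icc k δ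
    refine mem_iUnion.2 ⟨(fun i => ε i, fun i => δ i), ?_, ?_⟩ <;> simp only [σ] <;> linarith

lemma range_subsum_subset_add : range subsum ⊆ range subsum + range subsum := by
  have h0 : (0 : ℝ) ∈ range subsum := ⟨fun _ => false, by simp [subsum]⟩
  intro x hx
  simpa using add_mem_add hx h0

lemma dimH_range_subsum : dimH (range subsum) = 0 :=
  le_antisymm ((dimH_mono range_subsum_subset_add).trans dimH_range_subsum_add.le) zero_le

lemma isCantorSet_range_subsum : IsCantorSet (range subsum) :=
  isCantorSet_of_compact_preperfect (isCompact_range continuous_subsum) preperfect_range_subsum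
    (range_nonempty _) (interior_eq_empty_of_dimH_eq_zero dimH_range_subsum)

lemma isCantorSet_range_subsum_add : IsCantorSet (range subsum + range subsum) :=
  isCantorSet_of_compact_preperfect
    ((isCompact_range continuous_subsum).add (isCompact_range continuous_subsum))
    preperfect_range_subsum.add_right ((range_nonempty _).add (range_nonempty _))
    (interior_eq_empty_of_dimH_eq_zero dimH_range_subsum_add)

lemma achievementSet_eq_range_subsum {α : ℕ → ℝ} (h : ∀ i, α (i + 1) = shiftedTerm i) :
    achievementSet α = range subsum := by
  classical
  -- both sides are sums of the indicator of `A`, shifted by one since `0 ∉ A`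
  have key : ∀ (A : Set ℕ) (y : ℝ), A ⊆ {n | 1 ≤ n} →
      (HasSum (fun n : A => α (n : ℕ)) y ↔ subsum (fun i => decide (i + 1 ∈ A)) = y) := by
    intro A y hA
    have h0 : A.indicator α 0 = 0 :=
      indicator_of_notMem (fun h0 => absurd (hA h0) (by simp)) _
    have e : (fun i => A.indicator α (i + 1))
        = fun i => if decide (i + 1 ∈ A) then shiftedTerm i else 0 := by
      ext i
      simp [indicator_apply, h]
    have hs := hasSum_subtype_iff_indicator (f := α) (a := y) (s := A)
    have hs' := hasSum_nat_add_iff' (f := A.indicator α) (g := y) 1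
    rw [Finset.sum_range_one, h0, sub_zero, e] at hs'
    refine hs.trans (hs'.symm.trans ⟨fun H => H.tsum_eq, fun H => ?_⟩)
    rw [← H]
    exact (summable_ite_term _).hasSum
  ext y
  constructor
  · rintro ⟨A, hA, hy⟩
    exact ⟨_, (key A y hA).1 hy⟩
  · rintro ⟨ε, rfl⟩
    have hA : {n : ℕ | 1 ≤ n ∧ ε (n - 1) = true} ⊆ {n | 1 ≤ n} := fun n hn => hn.1
    refine ⟨_, hA, (key _ _ hA).2 ?_⟩
    simp

lemma remainder_eq {α : ℕ → ℝ} (h : ∀ i, α (i + 1) = shiftedTerm i) (k : ℕ) :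
    remainder α k = 1 / 2 * (1 / 3 ^ (k ^ 2)) := by
  let e : ℕ ≃ {i : ℕ // k < i} :=
    { toFun := fun i => ⟨i + k + 1, by omega⟩
      invFun := fun i => i.1 - k - 1
      left_inv := fun i => by simp only; omega
      right_inv := fun i => Subtype.ext (by have := i.2; simp only; omega) }
  rw [remainder, ← e.tsum_eq, ← (hasSum_term_add k).tsum_eq]
  exact tsum_congr fun i => h (i + k)

/-- For `α k = (1/2)(3^{-(k-1)²} - 3^{-k²})` (for `k ≥ 1`), the sequence `α` is fast
convergent, `E(α)` is a Cantor set of Hausdorff dimension `0`, and `E(α) + E(α)` is a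
Cantor set. In particular there is an achievable Cantor set `C` of Hausdorff dimension
`0` such that `C + C` is a Cantor set. -/
theorem exists_dimH_zero_cantor_with_cantor_sum (α : ℕ → ℝ)
    (hα : ∀ k : ℕ, 1 ≤ k →
      α k = (1 / 2) * ((1 : ℝ) / 3 ^ ((k - 1) ^ 2) - 1 / 3 ^ (k ^ 2))) :
    (∀ k, 1 ≤ k → remainder α k < α k) ∧
    IsCantorSet (achievementSet α) ∧ dimH (achievementSet α) = 0 ∧
    IsCantorSet (achievementSet α + achievementSet α) ∧
    ∃ C : Set ℝ,
      (∃ x : ℕ → ℝ, (Summable fun n => |x n|) ∧ C = achievementSet x) ∧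
      IsCantorSet C ∧ dimH C = 0 ∧ IsCantorSet (C + C) := by
  have h : ∀ i, α (i + 1) = shiftedTerm i := fun i => by
    rw [hα (i + 1) (by omega), Nat.add_sub_cancel, shiftedTerm]
  have hE := achievementSet_eq_range_subsum h
  have hsum : Summable fun n => |α n| :=
    ((summable_nat_add_iff 1).1 (by simpa only [h] using summable_term)).abs
  refine ⟨fun k hk => ?_, ?_, ?_, ?_, achievementSet α, ⟨α, hsum, rfl⟩, ?_⟩
  · obtain ⟨m, rfl⟩ := Nat.exists_eq_add_of_le' hk
    rw [remainder_eq h, h, shiftedTerm]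
    -- `3 ^ (m + 1)²` exceeds `2 * 3 ^ m²` because `(m + 1)² ≥ m² + 1`
    have h3 : (1 : ℝ) / 3 ^ ((m + 1) ^ 2) ≤ 1 / 3 ^ (m ^ 2) * (1 / 3) := by
      rw [one_div_mul_one_div, ← pow_succ]
      exact one_div_le_one_div_of_le (by positivity)
        (pow_le_pow_right₀ (by norm_num) (by nlinarith))
    have : (0 : ℝ) < 1 / 3 ^ (m ^ 2) := by positivity
    linarith
  all_goals rw [hE]
  · exact isCantorSet_range_subsum
  · exact dimH_range_subsum
  · exact isCantorSet_range_subsum_add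
  · exact ⟨isCantorSet_range_subsum, dimH_range_subsum, isCantorSet_range_subsum_add⟩
end

section
/- Let k, m be integers with k ≥ m ≥ 2, let s := km + k(k−1)/2, and let q := 1/(s−2m+3). Let E be the achievement set of the multigeometric (Ferens) sequence (m+k−1, m+k−2, …, m+1, m; q). Then E is a Cantor set if m ≥ 3, and E is a Cantorval if m = 2. -/
/-!
Grouping the series into blocks of length `k`, the achievement set becomes the set `T` of all sums
`∑ d_j q^j` with digits `d_j` in the set `D` of subset sums of `{m, …, m + k - 1}`
(`achievementSet_eq_digitSet`). It is compact and satisfies `T = q (D + T)`. Moreover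
`D ⊆ {0} ∪ [m, s - m] ∪ {s}`, a set of exactly `N = s - 2m + 3 = 1 / q` integers.

If `m ≥ 3`, the two-digit words `(m, N)` and `(m + 1, 0)` over this set have the same value
`N m + N`. So `T` is covered by fewer than `N ^ 2` copies of itself scaled by `N ^ (-2)`, and is
therefore Lebesgue null (`volume_digitSet_eq_zero`). A compact null set without isolated points is
totally disconnected and perfect, hence a Cantor set by Brouwer's theorem
(`nonempty_homeomorph_cantorSpace`).

If `m = 2`, then `N = s - 1` and `D = {0} ∪ [2, s - 2] ∪ {s}` is a complete residue system modulo
`N`. Consequently `T + ℤ = ℝ` and `T` contains an interval (`exists_Icc_subset_digitSet`). There is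
also a gap between `q max T` and `2 q`. Since `T` is a union of copies of `q ^ n T` at integer
multiples of `q ^ n`, small copies of both the interval and the gap occur next to every right
endpoint of a gap (`digitSet_right_of_gap`); left endpoints follow from the symmetry
`T = max T - T`, and `T` is a Cantorval (`isCantorval_of_symmetric`).
-/

open Set Filter Topology MeasureTheory
open scoped Pointwise

/-! ### Brouwer's characterization of the Cantor space -/

/-- In a totally separated space without isolated points, a nonempty open set can be cut by a
clopen set `V` into two nonempty parts; if a prescribed clopen `U` already does so, take `V = U`. -/
lemma exists_clopen_split {X : Type*} [TopologicalSpace X] [TotallySeparatedSpace X]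
    (hperf : ∀ (C : Set X), IsOpen C → C.Nonempty → C.Nontrivial)
    (C U : Set X) (hC : IsOpen C) (hne : C.Nonempty) (hU : IsClopen U) :
    ∃ V : Set X, IsClopen V ∧ (C ∩ V).Nonempty ∧ (C \ V).Nonempty ∧
      ((C ∩ U).Nonempty → (C \ U).Nonempty → V = U) := by
  by_cases h : (C ∩ U).Nonempty ∧ (C \ U).Nonempty
  · exact ⟨U, hU, h.1, h.2, fun _ _ => rfl⟩
  · obtain ⟨x, hx, y, hy, hxy⟩ := hperf C hC hne
    obtain ⟨W, hW, hxW, hyW⟩ := exists_isClopen_of_totally_separated hxy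
    exact ⟨W, hW, ⟨x, hx, hxW⟩, ⟨y, hy, hyW⟩, fun h1 h2 => absurd ⟨h1, h2⟩ h⟩

open Classical in
/-- The first `n` binary choices made by `x` (latest first) when at stage `n` each cell of points
with equal address is cut by the set `split cell n`. -/
noncomputable def address {X : Type*} (split : Set X → ℕ → Set X) : ℕ → X → List Bool
  | 0, _ => []
  | n + 1, x =>
    decide (x ∈ split {y | address split n y = address split n x} n) :: address split n x

/-- Brouwer's theorem: a nonempty compact metrizable totally disconnected space without isolated
points is homeomorphic to `ℕ → Bool`. Every cell is split at every stage, which makes the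
itinerary map surjective; the `n`-th clopen set is used at stage `n` whenever it cuts the cell,
which makes it injective. -/
theorem nonempty_homeomorph_cantorSpace {X : Type*} [TopologicalSpace X] [CompactSpace X]
    [T2Space X] [TotallyDisconnectedSpace X] [SecondCountableTopology X] [Nonempty X]
    (hperf : ∀ (C : Set X), IsOpen C → C.Nonempty → C.Nontrivial) :
    Nonempty (X ≃ₜ (ℕ → Bool)) := by
  classical
  have : Countable (TopologicalSpace.Clopens X) :=
    TopologicalSpace.Clopens.countable_iff_secondCountable.mpr inferInstance
  obtain ⟨U, hU⟩ := exists_surjective_nat (TopologicalSpace.Clopens X)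
  have key : ∀ (C : Set X) (n : ℕ), ∃ V : Set X, IsOpen C → C.Nonempty →
      IsClopen V ∧ (C ∩ V).Nonempty ∧ (C \ V).Nonempty ∧
      ((C ∩ U n).Nonempty → (C \ U n).Nonempty → V = U n) := by
    intro C n
    by_cases h : IsOpen C ∧ C.Nonempty
    · obtain ⟨V, hV⟩ := exists_clopen_split hperf C (U n) h.1 h.2 (U n).isClopen
      exact ⟨V, fun _ _ => hV⟩
    · exact ⟨∅, fun h1 h2 => absurd ⟨h1, h2⟩ h⟩
  choose split hsplit using key
  set L := address split with hL
  have hLs : ∀ n x, L (n + 1) x = decide (x ∈ split {y | L n y = L n x} n) :: L n x :=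
    fun n x => rfl
  have hloc : ∀ n, IsLocallyConstant (L n) := by
    intro n
    induction n with
    | zero => exact IsLocallyConstant.const []
    | succ n ih =>
      rw [IsLocallyConstant.iff_exists_open]
      intro x
      have ho : IsOpen {y | L n y = L n x} := ih.isOpen_fiber _
      have hc := (hsplit _ n ho ⟨x, rfl⟩).1
      by_cases hx : x ∈ split {y | L n y = L n x} n
      · refine ⟨_, ho.inter hc.isOpen, ⟨rfl, hx⟩, ?_⟩
        rintro y ⟨hy, hy'⟩
        have hy : L n y = L n x := hy
        rw [hLs, hLs, hy]
        simp [hx, hy']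
      · refine ⟨_, ho.inter hc.compl.isOpen, ⟨rfl, hx⟩, ?_⟩
        rintro y ⟨hy, hy'⟩
        have hy : L n y = L n x := hy
        have hy' : y ∉ split {y | L n y = L n x} n := hy'
        rw [hLs, hLs, hy]
        simp [hx, hy']
  let f : X → ℕ → Bool := fun x n => (L (n + 1) x).headD false
  have hf : ∀ x n, L (n + 1) x = f x n :: L n x := fun x n => rfl
  have hcont : Continuous f :=
    continuous_pi fun n => ((hloc (n + 1)).comp (fun l => l.headD false)).continuous
  have hinj : Function.Injective f := by
    intro x y hxy
    have hLL : ∀ n, L n x = L n y := by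
      intro n
      induction n with
      | zero => rfl
      | succ n ih => rw [hf, hf, hxy, ih]
    by_contra hne
    obtain ⟨W, hW, hxW, hyW⟩ := exists_isClopen_of_totally_separated hne
    obtain ⟨n, hn⟩ := hU ⟨W, hW⟩
    have hUn : (U n : Set X) = W := by rw [hn]; rfl
    have hs := (hsplit {z | L n z = L n x} n ((hloc n).isOpen_fiber _) ⟨x, rfl⟩).2.2.2
      ⟨x, rfl, by rw [hUn]; exact hxW⟩ ⟨y, (hLL n).symm, by rw [hUn]; exact hyW⟩
    have h1 := hLL (n + 1)
    rw [hLs, hLs, ← hLL n, hs, hUn] at h1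
    have hyW' : y ∉ W := hyW
    simp [hxW, hyW'] at h1
  have hsurj : Function.Surjective f := by
    intro g
    let l : ℕ → List Bool := fun n => Nat.rec [] (fun n r => g n :: r) n
    have hl : ∀ n, l (n + 1) = g n :: l n := fun n => rfl
    have hne : ∀ n, {x | L n x = l n}.Nonempty := by
      intro n
      induction n with
      | zero => exact ⟨Classical.arbitrary X, rfl⟩
      | succ n ih =>
        obtain ⟨-, ⟨z, hz, hz'⟩, ⟨w, hw, hw'⟩, -⟩ :=
          hsplit _ n ((hloc n).isOpen_fiber (l n)) ih
        have hz : L n z = l n := hz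
        have hw : L n w = l n := hw
        cases hg : g n with
        | true =>
          refine ⟨z, ?_⟩
          rw [mem_ofPred_eq, hLs, hl, hz, hg]
          simpa using hz'
        | false =>
          refine ⟨w, ?_⟩
          rw [mem_ofPred_eq, hLs, hl, hw, hg]
          simpa using hw'
    have hclosed : ∀ n, IsClosed {x | L n x = l n} := fun n => (hloc n).isClosed_fiber _
    obtain ⟨x, hx⟩ := IsCompact.nonempty_iInter_of_sequence_nonempty_isCompact_isClosed
      (fun n => {x | L n x = l n})
      (fun n x hx => by
        have hx : L (n + 1) x = l (n + 1) := hx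
        rw [hf, hl] at hx
        exact (List.cons.inj hx).2) hne (hclosed 0).isCompact hclosed
    refine ⟨x, ?_⟩
    funext n
    have h1 : L (n + 1) x = l (n + 1) := mem_iInter.mp hx (n + 1)
    rw [hf, hl] at h1
    exact (List.cons.inj h1).1
  exact ⟨hcont.homeoOfEquivCompactToT2 (f := Equiv.ofBijective f ⟨hinj, hsurj⟩)⟩

theorem isCantorSet_of_compact_perfect {E : Set ℝ} (hne : E.Nonempty) (hc : IsCompact E)
    (hint : interior E = ∅)
    (hperf : ∀ y ∈ E, ∀ ε > (0 : ℝ), ∃ z ∈ E, z ≠ y ∧ |z - y| < ε) : IsCantorSet E := by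
  have : CompactSpace E := isCompact_iff_compactSpace.mp hc
  have : Nonempty E := hne.to_subtype
  have : TotallyDisconnectedSpace E := by
    refine totallyDisconnectedSpace_subtype_iff.mpr fun t htE ht x hx y hy => ?_
    by_contra hxy
    wlog hlt : x < y generalizing x y
    · exact this y hy x hx (Ne.symm hxy) (lt_of_le_of_ne (not_lt.mp hlt) (Ne.symm hxy))
    have h1 : Ioo x y ⊆ interior E :=
      interior_maximal (Ioo_subset_Icc_self.trans ((ht.Icc_subset hx hy).trans htE)) isOpen_Ioo
    rw [hint] at h1
    obtain ⟨z, hz⟩ := nonempty_Ioo.mpr hlt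
    exact h1 hz
  obtain ⟨e⟩ := nonempty_homeomorph_cantorSpace (X := E) (by
    rintro C hC ⟨x, hx⟩
    obtain ⟨ε, hε, hball⟩ := Metric.isOpen_iff.mp hC x hx
    obtain ⟨z, hz, hzx, hd⟩ := hperf x x.2 ε hε
    refine ⟨⟨z, hz⟩, hball ?_, x, hx, fun h => hzx (congrArg Subtype.val h)⟩
    rw [Metric.mem_ball, Subtype.dist_eq, Real.dist_eq]
    exact hd)
  exact ⟨e.trans cantorSetHomeomorphNatToBool.symm⟩

/-! ### Sets of base-`q` expansions with digits in `D` -/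

/-- The set of all sums `∑_{j ≥ 1} d_j q^j` with digits `d_j ∈ D`; the exponent is `j + 1` because
digit sequences are indexed from `0`. -/
def digitSet (q : ℝ) (D : Set ℕ) : Set ℝ :=
  Set.range fun d : ℕ → D => ∑' j, ((d j : ℕ) : ℝ) * q ^ (j + 1)

section digits

variable {q : ℝ} {D : Set ℕ} {s N : ℕ}

lemma summable_geometric_shift (hq0 : 0 < q) (hq1 : q < 1) (c : ℝ) :
    Summable fun j : ℕ => c * q ^ (j + 1) :=
  ((summable_nat_add_iff 1).mpr (summable_geometric_of_lt_one hq0.le hq1)).mul_left c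

lemma summable_digits (hq0 : 0 < q) (hq1 : q < 1) {d : ℕ → ℕ} (hd : ∀ j, d j ≤ s) :
    Summable fun j => (d j : ℝ) * q ^ (j + 1) := by
  refine Summable.of_nonneg_of_le (fun j => by positivity) (fun j => ?_)
    (summable_geometric_shift hq0 hq1 (s : ℝ))
  have : (d j : ℝ) ≤ s := by exact_mod_cast hd j
  gcongr

lemma tsum_geometric_shift (hq0 : 0 < q) (hq1 : q < 1) (c : ℝ) :
    ∑' j : ℕ, c * q ^ (j + 1) = c * q / (1 - q) := by
  have : ∀ j : ℕ, c * q ^ (j + 1) = (c * q) * q ^ j := fun j => by ring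
  simp_rw [this]
  rw [tsum_mul_left, tsum_geometric_of_lt_one hq0.le hq1]
  rfl

/-- The self-similarity `T = q (D + T)`. -/
lemma mem_digitSet_iff (hq0 : 0 < q) (hq1 : q < 1) (hD : ∀ c ∈ D, c ≤ s) {y : ℝ} :
    y ∈ digitSet q D ↔ ∃ c ∈ D, ∃ t ∈ digitSet q D, y = q * (c + t) := by
  have step : ∀ d : ℕ → ℕ, (∀ j, d j ≤ s) → ∑' j, (d j : ℝ) * q ^ (j + 1) =
      q * (d 0 + ∑' j, (d (j + 1) : ℝ) * q ^ (j + 1)) := by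
    intro d hd
    rw [(summable_digits hq0 hq1 hd).tsum_eq_zero_add, mul_add, ← tsum_mul_left]
    congr 1
    · ring
    · exact tsum_congr fun j => by ring
  constructor
  · rintro ⟨d, rfl⟩
    exact ⟨d 0, (d 0).2, _, ⟨fun j => d (j + 1), rfl⟩,
      step (fun j => (d j : ℕ)) (fun j => hD _ (d j).2)⟩
  · rintro ⟨c, hc, _, ⟨d, rfl⟩, rfl⟩
    let d' : ℕ → D := fun j => Nat.casesOn (motive := fun _ => D) j ⟨c, hc⟩ d
    exact ⟨d', step (fun j => (d' j : ℕ)) (fun j => hD _ (d' j).2)⟩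

lemma isCompact_digitSet (hq0 : 0 < q) (hq1 : q < 1) (hD : ∀ c ∈ D, c ≤ s) :
    IsCompact (digitSet q D) := by
  have : Finite D := ((Set.finite_Iic s).subset hD).to_subtype
  refine isCompact_range ?_
  refine continuous_tsum (u := fun j => (s : ℝ) * q ^ (j + 1)) (fun j => ?_)
    (summable_geometric_shift hq0 hq1 s) (fun j d => ?_)
  · exact ((continuous_of_discreteTopology (f := fun c : D => ((c : ℕ) : ℝ))).comp
      (continuous_apply j)).mul continuous_const
  · have : ((d j : ℕ) : ℝ) ≤ s := by exact_mod_cast hD _ (d j).2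
    rw [Real.norm_of_nonneg (by positivity)]
    gcongr

lemma digitSet_subset_Icc (hq0 : 0 < q) (hq1 : q < 1) (hD : ∀ c ∈ D, c ≤ s) :
    digitSet q D ⊆ Icc 0 (s * q / (1 - q)) := by
  rintro _ ⟨d, rfl⟩
  refine ⟨tsum_nonneg fun j => by positivity, ?_⟩
  rw [← tsum_geometric_shift hq0 hq1]
  refine (summable_digits hq0 hq1 fun j => hD _ (d j).2).tsum_le_tsum (fun j => ?_)
    (summable_geometric_shift hq0 hq1 s)
  have : ((d j : ℕ) : ℝ) ≤ s := by exact_mod_cast hD _ (d j).2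
  gcongr

lemma const_mem_digitSet (hq0 : 0 < q) (hq1 : q < 1) {c : ℕ} (hc : c ∈ D) :
    (c : ℝ) * q / (1 - q) ∈ digitSet q D :=
  ⟨fun _ => ⟨c, hc⟩, tsum_geometric_shift hq0 hq1 c⟩

lemma zero_mem_digitSet (hq0 : 0 < q) (hq1 : q < 1) (h0 : 0 ∈ D) : (0 : ℝ) ∈ digitSet q D := by
  simpa using const_mem_digitSet hq0 hq1 h0

lemma digitSet_reflect (hq0 : 0 < q) (hq1 : q < 1) (hD : ∀ c ∈ D, c ≤ s)
    (hsymm : ∀ c ∈ D, s - c ∈ D) {y : ℝ} (hy : y ∈ digitSet q D) :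
    s * q / (1 - q) - y ∈ digitSet q D := by
  obtain ⟨d, rfl⟩ := hy
  refine ⟨fun j => ⟨s - d j, hsymm _ (d j).2⟩, ?_⟩
  dsimp only
  rw [← tsum_geometric_shift hq0 hq1, ← (summable_geometric_shift hq0 hq1 s).tsum_sub
    (summable_digits hq0 hq1 fun j => hD _ (d j).2)]
  refine tsum_congr fun j => ?_
  rw [Nat.cast_sub (hD _ (d j).2)]
  ring

/-- The `n`-fold self-similarity: `y` lies in a block `q ^ n * (p + T)` contained in `T`. The
offset `p` is an integer since `q = 1 / N`. -/
lemma digitSet_iterate (hq0 : 0 < q) (hq1 : q < 1) (hD : ∀ c ∈ D, c ≤ s) (hN : q * N = 1)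
    (n : ℕ) {y : ℝ} (hy : y ∈ digitSet q D) :
    ∃ p : ℕ, ∃ t ∈ digitSet q D, y = q ^ n * (p + t) ∧
      ∀ t' ∈ digitSet q D, q ^ n * (p + t') ∈ digitSet q D := by
  induction n generalizing y with
  | zero => exact ⟨0, y, hy, by simp, fun t' ht' => by simpa using ht'⟩
  | succ n ih =>
    obtain ⟨c, hc, t, ht, rfl⟩ := (mem_digitSet_iff hq0 hq1 hD).mp hy
    obtain ⟨p, u, hu, rfl, hp⟩ := ih ht
    have hNn : q ^ n * (N : ℝ) ^ n = 1 := by rw [← mul_pow, hN, one_pow]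
    have key : ∀ v : ℝ, q ^ (n + 1) * (((N ^ n * c + p : ℕ) : ℝ) + v) =
        q * (c + q ^ n * (p + v)) := by
      intro v
      push_cast
      linear_combination q * c * hNn
    refine ⟨N ^ n * c + p, u, hu, (key u).symm, fun t' ht' => ?_⟩
    rw [key]
    exact (mem_digitSet_iff hq0 hq1 hD).mpr ⟨c, hc, _, hp t' ht', rfl⟩

lemma exists_pow_mul_lt (hq0 : 0 < q) (hq1 : q < 1) (R : ℝ) {ε : ℝ} (hε : 0 < ε) :
    ∃ n : ℕ, q ^ n * R < ε := by
  have h := (tendsto_pow_atTop_nhds_zero_of_lt_one hq0.le hq1).mul_const R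
  rw [zero_mul] at h
  exact (h.eventually (gt_mem_nhds hε)).exists

lemma digitSet_perfect (hq0 : 0 < q) (hq1 : q < 1) (hD : ∀ c ∈ D, c ≤ s) (hN : q * N = 1)
    (h0 : 0 ∈ D) (hs : s ∈ D) (hspos : 0 < s) :
    ∀ y ∈ digitSet q D, ∀ ε > (0 : ℝ), ∃ z ∈ digitSet q D, z ≠ y ∧ |z - y| < ε := by
  intro y hy ε hε
  have hr : 0 < s * q / (1 - q) := by
    have : 0 < 1 - q := by linarith
    positivity
  obtain ⟨n, hn⟩ := exists_pow_mul_lt hq0 hq1 (s * q / (1 - q)) hε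
  obtain ⟨p, t, ht, rfl, hp⟩ := digitSet_iterate hq0 hq1 hD hN n hy
  have hqn : 0 < q ^ n := by positivity
  obtain ⟨u, hu, hut⟩ : ∃ u ∈ digitSet q D, u ≠ t := by
    by_cases h : t = 0
    · exact ⟨_, const_mem_digitSet hq0 hq1 hs, by rw [h]; exact hr.ne'⟩
    · exact ⟨0, zero_mem_digitSet hq0 hq1 h0, Ne.symm h⟩
  refine ⟨_, hp u hu, fun h => hut ?_, ?_⟩
  · have := mul_left_cancel₀ hqn.ne' h
    linarith
  · have h1 := digitSet_subset_Icc hq0 hq1 hD hu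
    have h2 := digitSet_subset_Icc hq0 hq1 hD ht
    have h3 : |u - t| ≤ s * q / (1 - q) := abs_le.mpr ⟨by linarith [h1.1, h2.2], by linarith [h1.2, h2.1]⟩
    have : q ^ n * (p + u) - q ^ n * (p + t) = q ^ n * (u - t) := by ring
    rw [this, abs_mul, abs_of_pos hqn]
    exact (mul_le_mul_of_nonneg_left h3 hqn.le).trans_lt hn

/-- If at most `N = 1 / q` digits are available and two different two-digit words have the same
value, then fewer than `N ^ 2` copies of `T` scaled by `q ^ 2` cover `T`, so `T` is null. -/
lemma volume_digitSet_eq_zero (hq0 : 0 < q) (hq1 : q < 1) (hD : ∀ c ∈ D, c ≤ s) (hN : q * N = 1)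
    (Z : Finset ℕ) (hDZ : ∀ c ∈ D, c ∈ Z) (hZ : Z.card ≤ N)
    (hcol : ∃ a ∈ Z, ∃ b ∈ Z, ∃ a' ∈ Z, ∃ b' ∈ Z, a ≠ a' ∧ N * a + b = N * a' + b') :
    volume (digitSet q D) = 0 := by
  classical
  set T := digitSet q D with hT
  set P : Finset ℕ := (Z ×ˢ Z).image fun z => N * z.1 + z.2 with hP
  have hcard : P.card < N ^ 2 := by
    have hle : (Z ×ˢ Z).card ≤ N ^ 2 := by
      rw [Finset.card_product, sq]
      exact Nat.mul_le_mul hZ hZ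
    refine lt_of_lt_of_le (lt_of_le_of_ne Finset.card_image_le fun h => ?_) hle
    obtain ⟨a, ha, b, hb, a', ha', b', hb', hne, he⟩ := hcol
    have := Finset.card_image_iff.mp h (x₁ := (a, b)) (x₂ := (a', b'))
      (by simp [ha, hb]) (by simp [ha', hb']) he
    exact hne (congrArg Prod.fst this)
  have hsub : T ⊆ ⋃ p ∈ P, (q ^ 2) • ((p : ℝ) +ᵥ T) := by
    intro y hy
    obtain ⟨c, hc, t, ht, rfl⟩ := (mem_digitSet_iff hq0 hq1 hD).mp hy
    obtain ⟨c', hc', t', ht', rfl⟩ := (mem_digitSet_iff hq0 hq1 hD).mp ht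
    simp only [mem_iUnion]
    refine ⟨N * c + c', Finset.mem_image.mpr ⟨(c, c'), by simp [hDZ _ hc, hDZ _ hc'], rfl⟩, ?_⟩
    refine ⟨_, ⟨t', ht', rfl⟩, ?_⟩
    simp only [smul_eq_mul, vadd_eq_add]
    push_cast
    linear_combination q * c * hN
  have hfin : volume T ≠ ⊤ := (isCompact_digitSet hq0 hq1 hD).measure_lt_top.ne
  have hle : volume T ≤ ∑ p ∈ P, ENNReal.ofReal (q ^ 2) * volume T := by
    refine (measure_mono hsub).trans ((measure_biUnion_finset_le P _).trans ?_)
    refine Finset.sum_le_sum fun p _ => ?_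
    rw [Measure.addHaar_smul, measure_vadd]
    simp [abs_of_pos hq0]
  rw [Finset.sum_const, nsmul_eq_mul] at hle
  have hle' := ENNReal.toReal_mono (by finiteness) hle
  rw [ENNReal.toReal_mul, ENNReal.toReal_mul, ENNReal.toReal_natCast,
    ENNReal.toReal_ofReal (by positivity)] at hle'
  have hv : (0 : ℝ) ≤ (volume T).toReal := ENNReal.toReal_nonneg
  have hPq : (P.card : ℝ) * q ^ 2 < 1 := by
    have h1 : (P.card : ℝ) < (N : ℝ) ^ 2 := by exact_mod_cast hcard
    calc (P.card : ℝ) * q ^ 2 < (N : ℝ) ^ 2 * q ^ 2 := by gcongr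
      _ = 1 := by rw [← mul_pow, mul_comm, hN, one_pow]
  have : (volume T).toReal = 0 := by nlinarith
  exact ((ENNReal.toReal_eq_zero_iff _).mp this).resolve_right hfin

end digits

/-! ### Gaps, interval components and Cantorvals -/

lemma exists_eq_Ioo_of_mem_gaps {E G : Set ℝ} (hE : IsClosed E) (hG : G ∈ gaps E) :
    ∃ a ∈ E, ∃ b ∈ E, a < b ∧ Disjoint (Ioo a b) E ∧ G = Ioo a b := by
  obtain ⟨⟨x, hx, rfl⟩, hb⟩ := hG
  have hxc : x ∈ Eᶜ := hx
  have hbdd := isBounded_iff_bddBelow_bddAbove.mp hb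
  have hL : (E ∩ Iic x).Nonempty := by
    by_contra h
    rw [not_nonempty_iff_eq_empty] at h
    have hsub : Iic x ⊆ Eᶜ := fun z hz hzE => (h ▸ (⟨hzE, hz⟩ : z ∈ E ∩ Iic x) : z ∈ (∅ : Set ℝ))
    exact not_bddBelow_Iic x
      (hbdd.1.mono (isPreconnected_Iic.subset_connectedComponentIn self_mem_Iic hsub))
  have hR : (E ∩ Ici x).Nonempty := by
    by_contra h
    rw [not_nonempty_iff_eq_empty] at h
    have hsub : Ici x ⊆ Eᶜ := fun z hz hzE => (h ▸ (⟨hzE, hz⟩ : z ∈ E ∩ Ici x) : z ∈ (∅ : Set ℝ))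
    exact not_bddAbove_Ici x
      (hbdd.2.mono (isPreconnected_Ici.subset_connectedComponentIn self_mem_Ici hsub))
  have hLb : BddAbove (E ∩ Iic x) := ⟨x, fun z hz => hz.2⟩
  have hRb : BddBelow (E ∩ Ici x) := ⟨x, fun z hz => hz.2⟩
  have ha := (hE.inter isClosed_Iic).csSup_mem hL hLb
  have hb := (hE.inter isClosed_Ici).csInf_mem hR hRb
  set a := sSup (E ∩ Iic x)
  set b := sInf (E ∩ Ici x)
  have hax : a < x := lt_of_le_of_ne ha.2 fun h => hx (h ▸ ha.1)
  have hxb : x < b := lt_of_le_of_ne hb.2 fun h => hx (h ▸ hb.1)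
  have hdisj : Ioo a b ⊆ Eᶜ := by
    intro z hz hzE
    rcases le_total z x with h | h
    · exact absurd (le_csSup hLb ⟨hzE, h⟩) (not_le.mpr hz.1)
    · exact absurd (csInf_le hRb ⟨hzE, h⟩) (not_le.mpr hz.2)
  refine ⟨a, ha.1, b, hb.1, hax.trans hxb, disjoint_left.mpr fun z hz => hdisj hz, ?_⟩
  refine Subset.antisymm (fun z hz => ?_)
    (isPreconnected_Ioo.subset_connectedComponentIn ⟨hax, hxb⟩ hdisj)
  have hoc : OrdConnected (connectedComponentIn Eᶜ x) :=
    isPreconnected_connectedComponentIn.ordConnected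
  have hxG := mem_connectedComponentIn hxc
  have hsub := connectedComponentIn_subset Eᶜ x
  constructor
  · by_contra h
    exact hsub (hoc.out hz hxG ⟨not_lt.mp h, hax.le⟩) ha.1
  · by_contra h
    exact hsub (hoc.out hxG hz ⟨hxb.le, not_lt.mp h⟩) hb.1

lemma component_mem_gaps_s16 {E : Set ℝ} {u v w : ℝ} (hu : u ∈ E) (hv : v ∈ E) (hw : w ∉ E)
    (huw : u < w) (hwv : w < v) : connectedComponentIn Eᶜ w ∈ gaps E := by
  refine ⟨⟨w, hw, rfl⟩, (Metric.isBounded_Icc u v).subset fun z hz => ?_⟩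
  have hoc : OrdConnected (connectedComponentIn Eᶜ w) :=
    isPreconnected_connectedComponentIn.ordConnected
  have hwG := mem_connectedComponentIn (show w ∈ Eᶜ from hw)
  have hsub := connectedComponentIn_subset Eᶜ w
  constructor
  · by_contra h
    exact hsub (hoc.out hz hwG ⟨(not_le.mp h).le, huw.le⟩) hu
  · by_contra h
    exact hsub (hoc.out hwG hz ⟨hwv.le, (not_le.mp h).le⟩) hv

lemma component_mem_intervalComponents_s16 {E : Set ℝ} {u v : ℝ} (huv : u < v)
    (hE : Icc u v ⊆ E) : connectedComponentIn E u ∈ intervalComponents E := by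
  have hu : u ∈ Icc u v := left_mem_Icc.mpr huv.le
  refine ⟨⟨u, hE hu, rfl⟩, fun h => huv.ne ?_⟩
  exact h (mem_connectedComponentIn (hE hu))
    (isPreconnected_Icc.subset_connectedComponentIn hu hE (right_mem_Icc.mpr huv.le))

/-- For a set symmetric under `y ↦ r - y`, the accumulation condition in the definition of a
Cantorval needs to be checked only to the right of right endpoints of gaps. -/
theorem isCantorval_of_symmetric {E : Set ℝ} (hc : IsCompact E) {r c : ℝ}
    (h0 : (0 : ℝ) ∈ E) (hsymm : ∀ y ∈ E, r - y ∈ E) (hc0 : 0 < c) (hcr : c < r) (hcE : c ∉ E)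
    (hright : ∀ a b, a < b → b ∈ E → Disjoint (Ioo a b) E → ∀ ε > (0 : ℝ),
      (∃ w v, b < w ∧ w < b + ε ∧ w ∉ E ∧ w < v ∧ v ∈ E) ∧
      ∃ u v, b < u ∧ u < v ∧ v < b + ε ∧ Icc u v ⊆ E) : IsCantorval E := by
  have hr : r ∈ E := by simpa using hsymm 0 h0
  have hgap := component_mem_gaps_s16 h0 hr hcE hc0 hcr
  refine ⟨⟨0, h0⟩, hc, ⟨_, hgap⟩, ?_, ?_⟩
  · obtain ⟨a, ha, b, hb, hab, hdisj, -⟩ := exists_eq_Ioo_of_mem_gaps hc.isClosed hgap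
    obtain ⟨-, u, v, -, huv, -, h⟩ := hright a b hab hb hdisj 1 one_pos
    exact ⟨_, component_mem_intervalComponents_s16 huv h⟩
  intro G hG p hp
  obtain ⟨a, ha, b, hb, hab, hdisj, rfl⟩ := exists_eq_Ioo_of_mem_gaps hc.isClosed hG
  rw [csInf_Ioo hab, csSup_Ioo hab] at hp
  rcases hp with rfl | hp
  · have hdisj' : Disjoint (Ioo (r - b) (r - p)) E := by
      refine disjoint_left.mpr fun z hz hzE => disjoint_left.mp hdisj ?_ (hsymm z hzE)
      exact ⟨by linarith [hz.2], by linarith [hz.1]⟩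
    have H := hright (r - b) (r - p) (by linarith) (hsymm p ha) hdisj'
    constructor
    · intro ε hε
      obtain ⟨⟨w, v, hw1, hw2, hwE, hwv, hv⟩, -⟩ := H ε hε
      have hwE' : r - w ∉ E := fun h => hwE (by simpa using hsymm _ h)
      have hmem := mem_connectedComponentIn (show r - w ∈ Eᶜ from hwE')
      refine ⟨_, component_mem_gaps_s16 (hsymm v hv) ha hwE' (by linarith) (by linarith), ?_,
        r - w, hmem, ?_⟩
      · intro h
        rw [h] at hmem
        linarith [hmem.1]
      · rw [Metric.mem_ball, Real.dist_eq, abs_lt]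
        constructor <;> linarith
    · intro ε hε
      obtain ⟨-, u, v, hu, huv, hv, hI⟩ := H ε hε
      have hI' : Icc (r - v) (r - u) ⊆ E := fun z hz => by
        have := hsymm _ (hI (show r - z ∈ Icc u v from ⟨by linarith [hz.2], by linarith [hz.1]⟩))
        simpa using this
      refine ⟨_, component_mem_intervalComponents_s16 (by linarith) hI', r - v,
        mem_connectedComponentIn (hI' ⟨le_refl _, by linarith⟩), ?_, ?_⟩
      · rw [Metric.mem_ball, Real.dist_eq, abs_lt]
        constructor <;> linarith
      · intro h
        have h : r - v = p := h
        linarith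
  · have hp : p = b := hp
    subst hp
    have H := hright a p hab hb hdisj
    constructor
    · intro ε hε
      obtain ⟨⟨w, v, hw1, hw2, hwE, hwv, hv⟩, -⟩ := H ε hε
      have hmem := mem_connectedComponentIn (show w ∈ Eᶜ from hwE)
      refine ⟨_, component_mem_gaps_s16 hb hv hwE hw1 hwv, ?_, w, hmem, ?_⟩
      · intro h
        rw [h] at hmem
        linarith [hmem.2]
      · rw [Metric.mem_ball, Real.dist_eq, abs_lt]
        constructor <;> linarith
    · intro ε hε
      obtain ⟨-, u, v, hu, huv, hv, hI⟩ := H ε hε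
      refine ⟨_, component_mem_intervalComponents_s16 huv hI, u,
        mem_connectedComponentIn (hI ⟨le_refl _, huv.le⟩), ?_, ?_⟩
      · rw [Metric.mem_ball, Real.dist_eq, abs_lt]
        constructor <;> linarith
      · intro h
        have h : u = p := h
        linarith

/-! ### The case of a complete residue system -/

section

variable {q : ℝ} {D : Set ℕ} {s N : ℕ}

/-- If `D` meets every residue class modulo `N = 1 / q`, then `T` contains an interval: `T + ℤ` is
closed and stable under multiplication by `q`, so it contains every `q ^ n * z` with `z ∈ ℤ` and
is all of `ℝ`; by Baire's theorem `T` has interior. -/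
lemma exists_Icc_subset_digitSet (hq0 : 0 < q) (hq1 : q < 1) (hD : ∀ c ∈ D, c ≤ s)
    (hN : q * N = 1) (h0 : 0 ∈ D) (hres : ∀ z : ℤ, ∃ c ∈ D, ∃ z' : ℤ, z = c + N * z') :
    ∃ u v : ℝ, 0 < u ∧ u < v ∧ Icc u v ⊆ digitSet q D := by
  set T := digitSet q D with hT
  have hTc := isCompact_digitSet hq0 hq1 hD
  set F : Set ℝ := T + range ((↑) : ℤ → ℝ) with hF
  have hFc : IsClosed F := Int.isClosedEmbedding_coe_real.isClosed_range.add_left_of_isCompact hTc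
  have hmul : ∀ y ∈ F, q * y ∈ F := by
    rintro _ ⟨t, ht, _, ⟨z, rfl⟩, rfl⟩
    obtain ⟨c, hc, z', rfl⟩ := hres z
    refine ⟨q * (c + t), (mem_digitSet_iff hq0 hq1 hD).mpr ⟨c, hc, t, ht, rfl⟩, z', ⟨z', rfl⟩, ?_⟩
    simp only
    push_cast
    linear_combination (-(z' : ℝ)) * hN
  have hmuln : ∀ n : ℕ, ∀ y ∈ F, q ^ n * y ∈ F := by
    intro n
    induction n with
    | zero => intro y hy; simpa using hy
    | succ n ih =>
      intro y hy
      rw [pow_succ, mul_assoc]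
      exact ih _ (hmul y hy)
  have hFuniv : ∀ y : ℝ, y ∈ F := by
    intro y
    rw [← hFc.closure_eq, Metric.mem_closure_iff]
    intro ε hε
    obtain ⟨n, hn⟩ := exists_pow_mul_lt hq0 hq1 1 hε
    have hqn : 0 < q ^ n := by positivity
    refine ⟨q ^ n * (⌊(N : ℝ) ^ n * y⌋ : ℝ), hmuln n _
      ⟨0, zero_mem_digitSet hq0 hq1 h0, _, ⟨_, rfl⟩, zero_add _⟩, ?_⟩
    have hNn : q ^ n * (N : ℝ) ^ n = 1 := by rw [← mul_pow, hN, one_pow]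
    have e : y - q ^ n * (⌊(N : ℝ) ^ n * y⌋ : ℝ) = q ^ n * Int.fract ((N : ℝ) ^ n * y) := by
      rw [Int.fract]
      linear_combination (-y) * hNn
    rw [Real.dist_eq, e, abs_of_nonneg (mul_nonneg hqn.le (Int.fract_nonneg _))]
    exact (mul_le_mul_of_nonneg_left (Int.fract_lt_one _).le hqn.le).trans_lt hn
  obtain ⟨z, x, hx⟩ := nonempty_interior_of_iUnion_of_closed
    (f := fun z : ℤ => (z : ℝ) +ᵥ T) (fun z => (hTc.vadd (z : ℝ)).isClosed) (by
      refine eq_univ_of_forall fun y => ?_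
      obtain ⟨t, ht, _, ⟨z, rfl⟩, rfl⟩ := hFuniv y
      exact mem_iUnion.mpr ⟨z, t, ht, add_comm _ _⟩)
  obtain ⟨ε, hε, hball⟩ := Metric.isOpen_iff.mp isOpen_interior x hx
  have hI : ∀ y, |y - (x - z)| < ε → y ∈ T := by
    intro y hy
    have : y + z ∈ Metric.ball x ε := by
      rw [Metric.mem_ball, Real.dist_eq]
      convert hy using 2
      ring
    obtain ⟨t, ht, hty⟩ := interior_subset (hball this)
    have hty : (z : ℝ) + t = y + z := hty
    have : y = t := by linarith
    rwa [this]
  have hxz : 0 ≤ x - z :=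
    (digitSet_subset_Icc hq0 hq1 hD (hI _ (by simpa using hε))).1
  refine ⟨x - z + ε / 4, x - z + ε / 2, by linarith, by linarith, fun y hy => hI y ?_⟩
  rw [abs_lt]
  constructor <;> linarith [hy.1, hy.2]

/-- To the right of a right endpoint `b` of a gap, `T` looks like `T` near `0`: for large `n` a
block `q ^ n * (p + T)` starts at `b`, and all other blocks reaching beyond `b` start at `b` or at
distance at least `q ^ n` to the right of it. Hence scaled copies of an interval in `T` and of a
missing point `c ∈ (0, 1)` appear arbitrarily close to `b`. -/
lemma digitSet_right_of_gap (hq0 : 0 < q) (hq1 : q < 1) (hD : ∀ c ∈ D, c ≤ s)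
    (hN : q * N = 1) (h0 : 0 ∈ D) (hres : ∀ z : ℤ, ∃ c ∈ D, ∃ z' : ℤ, z = c + N * z')
    {c : ℝ} (hc0 : 0 < c) (hc1 : c < 1) (hcT : c ∉ digitSet q D) {v₀ : ℝ}
    (hv₀ : v₀ ∈ digitSet q D) (hcv : c < v₀)
    (a b : ℝ) (hab : a < b) (hb : b ∈ digitSet q D) (hdisj : Disjoint (Ioo a b) (digitSet q D))
    (ε : ℝ) (hε : 0 < ε) :
    (∃ w v, b < w ∧ w < b + ε ∧ w ∉ digitSet q D ∧ w < v ∧ v ∈ digitSet q D) ∧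
      ∃ u v, b < u ∧ u < v ∧ v < b + ε ∧ Icc u v ⊆ digitSet q D := by
  set T := digitSet q D with hT
  set r : ℝ := s * q / (1 - q) with hr
  have hTr : T ⊆ Icc 0 r := digitSet_subset_Icc hq0 hq1 hD
  have h0T : (0 : ℝ) ∈ T := zero_mem_digitSet hq0 hq1 h0
  obtain ⟨u, v, hu0, huv, huvT⟩ := exists_Icc_subset_digitSet hq0 hq1 hD hN h0 hres
  obtain ⟨n, hn⟩ := exists_pow_mul_lt hq0 hq1 r (ε := min ε (b - a)) (lt_min hε (by linarith))
  have hnε := hn.trans_le (min_le_left _ _)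
  have hnab := hn.trans_le (min_le_right _ _)
  have hqn : 0 < q ^ n := by positivity
  -- A level-`n` block that reaches `b` or beyond starts at `b` or later.
  have hstart : ∀ (p : ℕ) (t : ℝ), t ∈ T → b ≤ q ^ n * (p + t) →
      (∀ t' ∈ T, q ^ n * (p + t') ∈ T) → b ≤ q ^ n * p := by
    intro p t ht hbt hp
    by_contra h
    have h1 : q ^ n * t ≤ q ^ n * r := mul_le_mul_of_nonneg_left (hTr ht).2 hqn.le
    rw [mul_add] at hbt
    have hmem : q ^ n * (p : ℝ) ∈ Ioo a b := ⟨by linarith, not_le.mp h⟩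
    exact disjoint_left.mp hdisj hmem (by simpa using hp 0 h0T)
  obtain ⟨p, t, ht, hbt, hp⟩ := digitSet_iterate hq0 hq1 hD hN n hb
  have hbp : b = q ^ n * p := by
    refine le_antisymm (hstart p t ht hbt.le hp) ?_
    rw [hbt, mul_add]
    linarith [mul_nonneg hqn.le (hTr ht).1]
  have hcopy : ∀ t' ∈ T, b + q ^ n * t' ∈ T := by
    intro t' ht'
    rw [hbp, ← mul_add]
    exact hp t' ht'
  have hscale : ∀ {x y : ℝ}, x < y → q ^ n * x < q ^ n * y :=
    fun h => mul_lt_mul_of_pos_left h hqn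
  constructor
  · refine ⟨b + q ^ n * c, b + q ^ n * v₀, ?_, ?_, ?_, ?_, hcopy v₀ hv₀⟩
    · linarith [mul_pos hqn hc0]
    · linarith [hscale (hcv.trans_le (hTr hv₀).2)]
    · intro hw
      obtain ⟨p', t', ht', hwt, hp'⟩ := digitSet_iterate hq0 hq1 hD hN n hw
      have h1 := hstart p' t' ht' (by rw [← hwt]; linarith [mul_pos hqn hc0]) hp'
      rw [hbp] at h1 hwt
      have hpp : p ≤ p' := by exact_mod_cast le_of_mul_le_mul_left h1 hqn
      have hct : (p : ℝ) + c = p' + t' := by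
        rw [← mul_add] at hwt
        exact mul_left_cancel₀ hqn.ne' hwt
      rcases hpp.eq_or_lt with h | h
      · subst h
        have : c = t' := by linarith
        exact hcT (this ▸ ht')
      · have h2 : (p : ℝ) + 1 ≤ p' := by exact_mod_cast h
        linarith [(hTr ht').1]
    · linarith [hscale hcv]
  · refine ⟨b + q ^ n * u, b + q ^ n * v, ?_, ?_, ?_, ?_⟩
    · linarith [mul_pos hqn hu0]
    · linarith [hscale huv]
    · have := mul_le_mul_of_nonneg_left (hTr (huvT ⟨huv.le, le_refl _⟩)).2 hqn.le
      linarith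
    · intro z hz
      have e : z = b + q ^ n * ((z - b) / q ^ n) := by field_simp; ring
      rw [e]
      refine hcopy _ (huvT ⟨?_, ?_⟩)
      · rw [le_div_iff₀ hqn]; linarith [hz.1]
      · rw [div_le_iff₀ hqn]; linarith [hz.2]

end

/-! ### Subset sums of `m, m + 1, …, m + k - 1` -/

/-- The subset sums of `{m, m + 1, …, m + k - 1}`; `p` is the indicator of the subset, shifted
by `m`, and only its values below `k` matter. -/
def ferensDigits (k m : ℕ) : Set ℕ :=
  {c | ∃ p : ℕ → Bool, c = ∑ i ∈ Finset.range k, if p i then m + i else 0}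

lemma sum_range_ferens (k m : ℕ) :
    ∑ i ∈ Finset.range k, (m + i) = k * m + k * (k - 1) / 2 := by
  rw [Finset.sum_add_distrib, Finset.sum_range_id]
  simp

lemma zero_mem_ferensDigits (k m : ℕ) : 0 ∈ ferensDigits k m :=
  ⟨fun _ => false, by simp⟩

/-- Complementing the subset shows that subset sums are symmetric about half of the total. -/
lemma sub_mem_ferensDigits {k m c : ℕ} (hc : c ∈ ferensDigits k m) :
    c ≤ ∑ i ∈ Finset.range k, (m + i) ∧
      ∑ i ∈ Finset.range k, (m + i) - c ∈ ferensDigits k m := by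
  obtain ⟨p, rfl⟩ := hc
  have h : ∑ i ∈ Finset.range k, (m + i) = (∑ i ∈ Finset.range k, if p i then m + i else 0) +
      ∑ i ∈ Finset.range k, if !p i then m + i else 0 := by
    rw [← Finset.sum_add_distrib]
    refine Finset.sum_congr rfl fun i _ => ?_
    cases p i <;> simp
  refine ⟨by omega, fun i => !p i, ?_⟩
  dsimp only
  omega

lemma le_of_mem_ferensDigits {k m c : ℕ} (hc : c ∈ ferensDigits k m) (h0 : c ≠ 0) : m ≤ c := by
  obtain ⟨p, rfl⟩ := hc
  obtain ⟨i, hi, hne⟩ := Finset.exists_ne_zero_of_sum_ne_zero h0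
  have hp : p i = true := by
    by_contra h
    simp [h] at hne
  have := Finset.single_le_sum (f := fun i => if p i then m + i else 0)
    (fun _ _ => Nat.zero_le _) hi
  simp only [hp, if_true] at this
  omega

lemma mem_ferensDigits_succ {k m c : ℕ} (hc : c ∈ ferensDigits k m) :
    c ∈ ferensDigits (k + 1) m ∧ c + (m + k) ∈ ferensDigits (k + 1) m := by
  obtain ⟨p, rfl⟩ := hc
  have h : ∀ b : Bool, ∑ i ∈ Finset.range k, (if Function.update p k b i then m + i else 0) =
      ∑ i ∈ Finset.range k, if p i then m + i else 0 := fun b =>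
    Finset.sum_congr rfl fun i hi => by
      rw [Function.update_of_ne (Finset.mem_range.mp hi).ne]
  refine ⟨⟨Function.update p k false, ?_⟩, ⟨Function.update p k true, ?_⟩⟩
  · rw [Finset.sum_range_succ, h]; simp
  · rw [Finset.sum_range_succ, h]; simp

/-- Every integer from `2` to (total sum) `- 2` is a subset sum of `{2, …, k + 1}`. -/
lemma mem_ferensDigits_two {k : ℕ} (hk : 2 ≤ k) {c : ℕ} (h2 : 2 ≤ c)
    (hc : c + 2 ≤ ∑ i ∈ Finset.range k, (2 + i)) : c ∈ ferensDigits k 2 := by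
  induction k, hk using Nat.le_induction generalizing c with
  | base =>
    have h3 : c = 2 ∨ c = 3 := by simp [Finset.sum_range_succ] at hc; omega
    rcases h3 with rfl | rfl
    · exact ⟨fun i => i == 0, by decide⟩
    · exact ⟨fun i => i == 1, by decide⟩
  | succ k hk ih =>
    rw [Finset.sum_range_succ] at hc
    set S := ∑ i ∈ Finset.range k, (2 + i) with hS
    -- The value `S = k + 4` must be excluded: then `c = k + 3` would be obtained in neither way.
    have hS2 : S = k + 3 ∨ k + 5 ≤ S := by
      clear ih hc
      rw [hS]
      clear hS
      clear S
      induction k, hk using Nat.le_induction with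
      | base => decide
      | succ k _ ih => rw [Finset.sum_range_succ]; omega
    have hSmem : S ∈ ferensDigits k 2 := by
      simpa using (sub_mem_ferensDigits (zero_mem_ferensDigits k 2)).2
    by_cases h1 : c + 2 ≤ S
    · exact (mem_ferensDigits_succ (ih h2 h1)).1
    by_cases h4 : c = S
    · exact h4 ▸ (mem_ferensDigits_succ hSmem).1
    by_cases h5 : c = 2 + k
    · have := (mem_ferensDigits_succ (zero_mem_ferensDigits k 2)).2
      rwa [zero_add, ← h5] at this
    have h6 : 2 + k + 2 ≤ c := by omega
    have := (mem_ferensDigits_succ (ih (c := c - (2 + k)) (by omega) (by omega))).2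
    rwa [Nat.sub_add_cancel (by omega)] at this

/-! ### The achievement set as a digit set -/

/-- Grouping a subseries into blocks of length `k`. Inside each block the order is reversed: the
term `(m + i) * q ^ (j + 1)` has index `j * k + (k - i)`. -/
lemma hasSum_block_iff {k m : ℕ} (hk : 0 < k) {q : ℝ} (hq0 : 0 < q) {x : ℕ → ℝ}
    (hx : ∀ j i : ℕ, 1 ≤ j → 1 ≤ i → i ≤ k →
      x ((j - 1) * k + i) = ((m + k - i : ℕ) : ℝ) * q ^ j)
    (p : ℕ → ℕ → Bool) (A : Set ℕ) (h0 : 0 ∉ A)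
    (hA : ∀ j i, i < k → (j * k + (k - i) ∈ A ↔ p j i = true)) (y : ℝ) :
    HasSum (fun n : A => x (n : ℕ)) y ↔
      HasSum (fun j => ((∑ i ∈ Finset.range k, if p j i then m + i else 0 : ℕ) : ℝ) *
        q ^ (j + 1)) y := by
  classical
  have : NeZero k := ⟨hk.ne'⟩
  let e : ℕ × Fin k ≃ ℕ :=
    ((Nat.divModEquiv k).trans (Equiv.prodCongr (Equiv.refl ℕ) Fin.revPerm)).symm
  have he : ∀ z : ℕ × Fin k, e z + 1 = z.1 * k + (k - z.2) := by
    intro z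
    have : e z = z.1 * k + (Fin.rev z.2 : ℕ) := rfl
    rw [this, Fin.val_rev]
    omega
  let F : ℕ × Fin k → ℝ := fun z => ((if p z.1 z.2 then m + z.2 else 0 : ℕ) : ℝ) * q ^ (z.1 + 1)
  have hF : ∀ z, A.indicator x (e z + 1) = F z := by
    rintro ⟨j, i⟩
    rw [he]
    dsimp only [F]
    have hi := i.2
    by_cases hp : p j i = true
    · rw [indicator_of_mem ((hA j i hi).mpr hp), if_pos hp]
      have := hx (j + 1) (k - i) (by omega) (by omega) (by omega)
      rw [Nat.add_sub_cancel] at this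
      rw [this]
      congr 3
      omega
    · rw [indicator_of_notMem (fun h => hp ((hA j i hi).mp h)), if_neg hp]
      simp
  have h1 : HasSum (fun n : A => x (n : ℕ)) y ↔ HasSum F y := by
    rw [show (fun n : A => x (n : ℕ)) = x ∘ ((↑) : A → ℕ) from rfl,
      hasSum_subtype_iff_indicator]
    have := hasSum_nat_add_iff (f := A.indicator x) (g := y) 1
    rw [Finset.sum_range_one, indicator_of_notMem h0, add_zero] at this
    rw [← this, ← e.hasSum_iff]
    exact iff_of_eq (congrArg (fun f => HasSum f y) (funext hF))
  have hfib : ∀ j, HasSum (fun i => F (j, i))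
      (((∑ i ∈ Finset.range k, if p j i then m + i else 0 : ℕ) : ℝ) * q ^ (j + 1)) := by
    intro j
    have : ((∑ i ∈ Finset.range k, if p j i then m + i else 0 : ℕ) : ℝ) * q ^ (j + 1) =
        ∑ i, F (j, i) := by
      dsimp only [F]
      rw [← Finset.sum_mul, ← Nat.cast_sum,
        Fin.sum_univ_eq_sum_range (fun i => if p j i then m + i else 0)]
    rw [this]
    exact hasSum_fintype _
  rw [h1]
  refine ⟨fun h => h.prod_fiberwise hfib, fun h => ?_⟩
  have hs : Summable F := by
    rw [summable_prod_of_nonneg (fun z => by positivity)]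
    refine ⟨fun j => (hfib j).summable, ?_⟩
    simp_rw [(hfib _).tsum_eq]
    exact h.summable
  have := hs.hasSum.prod_fiberwise hfib
  rw [← this.unique h]
  exact hs.hasSum

lemma achievementSet_eq_digitSet {k m s : ℕ} (hk : 0 < k) {q : ℝ} (hq0 : 0 < q) (hq1 : q < 1)
    {x : ℕ → ℝ}
    (hx : ∀ j i : ℕ, 1 ≤ j → 1 ≤ i → i ≤ k →
      x ((j - 1) * k + i) = ((m + k - i : ℕ) : ℝ) * q ^ j)
    (hD : ∀ c ∈ ferensDigits k m, c ≤ s) :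
    achievementSet x = digitSet q (ferensDigits k m) := by
  classical
  ext y
  constructor
  · rintro ⟨A, hA, hy⟩
    rw [hasSum_block_iff hk hq0 hx (fun j i => decide (j * k + (k - i) ∈ A)) A
      (fun h => absurd (hA h) (by simp)) (fun j i _ => by simp)] at hy
    exact ⟨fun j => ⟨_, fun i => decide (j * k + (k - i) ∈ A), rfl⟩, hy.tsum_eq⟩
  · rintro ⟨d, rfl⟩
    choose p hp using fun j => (d j).2
    let A : Set ℕ := {n | 1 ≤ n ∧ p ((n - 1) / k) (k - 1 - (n - 1) % k) = true}
    refine ⟨A, fun n hn => hn.1, ?_⟩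
    rw [hasSum_block_iff hk hq0 hx p A (fun h => absurd h.1 (by simp))]
    · simp_rw [← hp]
      exact (summable_digits hq0 hq1 fun j => hD _ (d j).2).hasSum
    · intro j i hi
      have e1 : j * k + (k - i) - 1 = (k - 1 - i) + k * j := by rw [mul_comm]; omega
      have e2 : (j * k + (k - i) - 1) / k = j := by
        rw [e1, Nat.add_mul_div_left _ _ hk, Nat.div_eq_of_lt (by omega), zero_add]
      have e3 : k - 1 - (j * k + (k - i) - 1) % k = i := by
        rw [e1, Nat.add_mul_mod_self_left, Nat.mod_eq_of_lt (by omega)]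
        omega
      have e4 : 1 ≤ j * k + (k - i) := by omega
      show (1 ≤ j * k + (k - i) ∧ _) ↔ _
      rw [e2, e3]
      simp [e4]

/-! ### The theorem -/

/-- For the Ferens sequence `(m+k-1, …, m; q)` with `k ≥ m ≥ 2`, `s = km + k(k-1)/2`
and `q = 1/(s-2m+3)`, the achievement set is a Cantor set if `m ≥ 3` and a Cantorval
if `m = 2`. -/
theorem ferens_at_critical_ratio (k m : ℕ) (hm : 2 ≤ m) (hmk : m ≤ k)
    (s : ℕ) (hs : s = k * m + k * (k - 1) / 2)
    (q : ℝ) (hq : q = 1 / ((s : ℝ) - 2 * m + 3))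
    (x : ℕ → ℝ)
    (hx : ∀ j i : ℕ, 1 ≤ j → 1 ≤ i → i ≤ k →
      x ((j - 1) * k + i) = ((m + k - i : ℕ) : ℝ) * q ^ j) :
    (3 ≤ m → IsCantorSet (achievementSet x)) ∧
    (m = 2 → IsCantorval (achievementSet x)) := by
  rw [← sum_range_ferens] at hs
  have hD : ∀ c ∈ ferensDigits k m, c ≤ s := fun c hc => hs ▸ (sub_mem_ferensDigits hc).1
  have hsymm : ∀ c ∈ ferensDigits k m, s - c ∈ ferensDigits k m :=
    fun c hc => hs ▸ (sub_mem_ferensDigits hc).2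
  have h0 := zero_mem_ferensDigits k m
  have hsD : s ∈ ferensDigits k m := by simpa using hsymm 0 h0
  have hs2 : 2 * m + 1 ≤ s := by
    rw [hs]
    calc 2 * m + 1 = ∑ i ∈ Finset.range 2, (m + i) := by simp [Finset.sum_range_succ]; omega
      _ ≤ _ := Finset.sum_le_sum_of_subset (Finset.range_mono (by omega))
  obtain ⟨N, hN⟩ : ∃ N, N + 2 * m = s + 3 := ⟨s + 3 - 2 * m, by omega⟩
  have hNr : (s : ℝ) - 2 * m + 3 = N := by
    have : (N : ℝ) + 2 * m = s + 3 := by exact_mod_cast hN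
    linarith
  have hN4 : (4 : ℝ) ≤ N := by exact_mod_cast (by omega : 4 ≤ N)
  rw [hNr] at hq
  have hq0 : 0 < q := by rw [hq]; positivity
  have hqN : q * N = 1 := by rw [hq]; field_simp
  have hq1 : q < 1 := by nlinarith
  rw [achievementSet_eq_digitSet (by omega) hq0 hq1 hx hD]
  constructor
  · intro hm3
    have hs3 : 3 * m + 3 ≤ s := by
      rw [hs]
      calc 3 * m + 3 = ∑ i ∈ Finset.range 3, (m + i) := by simp [Finset.sum_range_succ]; omega
        _ ≤ _ := Finset.sum_le_sum_of_subset (Finset.range_mono (by omega))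
    refine isCantorSet_of_compact_perfect ⟨0, zero_mem_digitSet hq0 hq1 h0⟩
      (isCompact_digitSet hq0 hq1 hD) ?_
      (digitSet_perfect hq0 hq1 hD hqN h0 hsD (by omega))
    have hvol := volume_digitSet_eq_zero hq0 hq1 hD hqN
      (insert 0 (insert s (Finset.Icc m (s - m)))) ?_ ?_ ?_
    · exact Measure.interior_eq_empty_of_null hvol
    · intro c hc
      simp only [Finset.mem_insert, Finset.mem_Icc]
      by_cases hc0 : c = 0
      · exact Or.inl hc0
      by_cases hcs : c = s
      · exact Or.inr (Or.inl hcs)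
      have h1 := le_of_mem_ferensDigits hc hc0
      have h2 := hD c hc
      have h3 := le_of_mem_ferensDigits (hsymm c hc) (by omega)
      omega
    · refine (Finset.card_insert_le _ _).trans ?_
      refine (Nat.succ_le_succ (Finset.card_insert_le _ _)).trans ?_
      rw [Nat.card_Icc]
      omega
    -- The words `(m, N)` and `(m + 1, 0)` have the same value; `N ≤ s - m` because `m ≥ 3`.
    · refine ⟨m, ?_, N, ?_, m + 1, ?_, 0, Finset.mem_insert_self _ _, by omega, by ring⟩ <;>
        simp only [Finset.mem_insert, Finset.mem_Icc] <;> omega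
  · rintro rfl
    have hs5 : 5 ≤ s := by omega
    have hNs : N + 1 = s := by omega
    set r : ℝ := s * q / (1 - q) with hr
    have hsr : (s : ℝ) = N + 1 := by exact_mod_cast hNs.symm
    have hrval : r * (1 - q) = 1 + q := by
      rw [hr, div_mul_cancel₀ _ (by linarith), hsr]
      linarith
    have hq4 : q ≤ 1 / 4 := by nlinarith
    have hr2 : r < 2 := by nlinarith
    have hr1 : 1 < r := by nlinarith
    have hres : ∀ z : ℤ, ∃ c ∈ ferensDigits k 2, ∃ z' : ℤ, z = c + N * z' := by
      intro z
      have hNpos : (0 : ℤ) < N := by omega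
      have hmod := Int.emod_add_mul_ediv z N
      have hm0 := Int.emod_nonneg z hNpos.ne'
      have hm1 := Int.emod_lt_of_pos z hNpos
      obtain ⟨u, hu⟩ := Int.eq_ofNat_of_zero_le hm0
      rw [hu] at hmod hm1
      -- The digits `2, …, s - 2` have themselves as residues, `0` has residue `0`, and
      -- `s = N + 1` has residue `1`.
      rcases Nat.lt_or_ge u 2 with h | h
      · interval_cases u
        · exact ⟨0, h0, z / N, by simpa using hmod.symm⟩
        · refine ⟨s, hsD, z / N - 1, ?_⟩
          rw [← hNs]
          push_cast at hmod ⊢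
          linarith
      · exact ⟨u, mem_ferensDigits_two hmk h (by omega), z / N, hmod.symm⟩
    -- The midpoint of the gap between `q r` (largest element with first digit `0`) and `2 q`
    -- (smallest element with nonzero first digit).
    have hcT : q * (r + 2) / 2 ∉ digitSet q (ferensDigits k 2) := by
      intro h
      obtain ⟨c, hc, t, ht, he⟩ := (mem_digitSet_iff hq0 hq1 hD).mp h
      have htr := digitSet_subset_Icc hq0 hq1 hD ht
      have he' : (r + 2) / 2 = c + t := mul_left_cancel₀ hq0.ne' (by rw [← he]; ring)
      by_cases hc0 : c = 0
      · rw [hc0] at he'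
        push_cast at he'
        linarith [htr.2]
      · have : (2 : ℝ) ≤ c := by exact_mod_cast le_of_mem_ferensDigits hc hc0
        linarith [htr.1]
    have hc0 : 0 < q * (r + 2) / 2 := by positivity
    have hc1 : q * (r + 2) / 2 < 1 := by nlinarith
    refine isCantorval_of_symmetric (isCompact_digitSet hq0 hq1 hD)
      (zero_mem_digitSet hq0 hq1 h0) (fun y hy => digitSet_reflect hq0 hq1 hD hsymm hy)
      hc0 (hc1.trans hr1) hcT ?_
    exact fun a b hab hb hdisj ε hε => digitSet_right_of_gap hq0 hq1 hD hqN h0 hres hc0 hc1 hcT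
      (const_mem_digitSet hq0 hq1 hsD) (hc1.trans hr1) a b hab hb hdisj ε hε
end
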